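/- arXiv:2411.04922 — 3 statements merged into one kernel-verified Lean document; each statement's English description precedes it below -/
import Mathlib

section
/- Let X̂ solve the fixed-point problem and define n(t,x,p) = n₀(X₀(X̂(t,x,p) − v(p)t, p), p). Then the extended space-derivative of X̂ satisfies ∂̌X̂(t,x,p)/∂̌x = 1^dr(t,x,p) for all t,x,p, where 1^dr(t,x,·) is the dressing of the constant 1 with respect to n(t,x,·); consequently, for all t, all x > y, and all p: (X̂(t,x,p) − X̂(t,y,p))/(x−y) ≥ R(κ₀) > 0, so X̂(t,·,p) is strictly increasing and a homeomorphism of ℝ. -/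
open MeasureTheory

namespace S14

lemma contract {f : ℝ → ℝ} {κ a : ℝ} (hb : ∃ C, ∀ p, |f p| ≤ C) (hκ : κ < 1)
    (h : ∀ B, (∀ q, |f q| ≤ B) → ∀ p, |f p| ≤ a + κ * B) : ∀ p, |f p| ≤ a / (1 - κ) := by
  obtain ⟨C, hC⟩ := hb
  have hbd : BddAbove (Set.range fun p => |f p|) := ⟨C, by rintro _ ⟨p, rfl⟩; exact hC p⟩
  have h1 : ∀ q, |f q| ≤ ⨆ p, |f p| := fun q => le_ciSup hbd q
  have h2 : (⨆ p, |f p|) ≤ a + κ * ⨆ p, |f p| := ciSup_le (h _ h1)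
  intro p
  rw [le_div_iff₀ (by linarith)]
  have := h1 p
  nlinarith

lemma int_aux {T w f : ℝ → ℝ} {C B : ℝ} (hT : Integrable T) (hw : Measurable w)
    (hw0 : ∀ q, 0 ≤ w q) (hwC : ∀ q, w q ≤ C) (hf : Measurable f) (hB : ∀ q, |f q| ≤ B) :
    Integrable (fun q => T q * (w q * f q)) := by
  refine hT.mul_bdd (c := C * B) (hw.mul hf).aestronglyMeasurable (Filter.Eventually.of_forall fun q => ?_)
  rw [norm_mul, Real.norm_eq_abs, Real.norm_eq_abs, abs_of_nonneg (hw0 q)]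
  exact mul_le_mul (hwC q) (hB q) (abs_nonneg _) ((hw0 q).trans (hwC q))

lemma abs_int_le {T w S f : ℝ → ℝ} {C B κ : ℝ} (hT : Integrable T) (hw : Measurable w)
    (hw0 : ∀ q, 0 ≤ w q) (hwS : ∀ q, w q ≤ S q) (hSC : ∀ q, S q ≤ C) (hS : Measurable S)
    (hκ : (∫ q, |T q| * S q) ≤ κ) (hB : ∀ q, |f q| ≤ B) :
    |∫ q, T q * (w q * f q)| ≤ κ * B := by
  have hB0 : 0 ≤ B := (abs_nonneg _).trans (hB 0)
  have hS0 : ∀ q, 0 ≤ S q := fun q => (hw0 q).trans (hwS q)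
  have hi : Integrable (fun q => |T q| * (S q * B)) :=
    int_aux (f := fun _ => B) (B := |B|) hT.abs hS hS0 hSC measurable_const (fun _ => le_rfl)
  calc |∫ q, T q * (w q * f q)| ≤ ∫ q, |T q| * (S q * B) := by
        rw [← Real.norm_eq_abs]
        refine norm_integral_le_of_norm_le hi (Filter.Eventually.of_forall fun q => ?_)
        rw [norm_mul, norm_mul, Real.norm_eq_abs, Real.norm_eq_abs, Real.norm_eq_abs, abs_of_nonneg (hw0 q)]
        exact mul_le_mul_of_nonneg_left
          (mul_le_mul (hwS q) (hB q) (abs_nonneg _) (hS0 q)) (abs_nonneg _)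
    _ = (∫ q, |T q| * S q) * B := by
        rw [← integral_mul_const]; simp only [mul_assoc]
    _ ≤ κ * B := mul_le_mul_of_nonneg_right hκ hB0

lemma int_le_pos {T w S f : ℝ → ℝ} {C B κ b : ℝ} (hT : Integrable T) (hT0 : ∀ q, 0 ≤ T q)
    (hw : Measurable w)
    (hw0 : ∀ q, 0 ≤ w q) (hwS : ∀ q, w q ≤ S q) (hSC : ∀ q, S q ≤ C) (hS : Measurable S)
    (hκ : (∫ q, |T q| * S q) ≤ κ) (hf : Measurable f) (hB : ∀ q, |f q| ≤ B) (hb : 0 ≤ b)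
    (hfb : ∀ q, f q ≤ b) :
    ∫ q, T q * (w q * f q) ≤ κ * b := by
  have h1 : ∫ q, T q * (w q * f q) ≤ ∫ q, T q * (w q * b) := by
    refine integral_mono (int_aux hT hw hw0 (fun q => (hwS q).trans (hSC q)) hf hB)
      (int_aux (f := fun _ => b) (B := |b|) hT hw hw0 (fun q => (hwS q).trans (hSC q))
        measurable_const (fun _ => le_rfl)) (fun q => ?_)
    exact mul_le_mul_of_nonneg_left (mul_le_mul_of_nonneg_left (hfb q) (hw0 q)) (hT0 q)
  refine h1.trans ((le_abs_self _).trans ?_)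
  exact abs_int_le (f := fun _ => b) hT hw hw0 hwS hSC hS hκ (fun _ => (abs_of_nonneg hb).le)

/-- Bounds for solutions of a dressing equation. -/
lemma dressing {T : ℝ → ℝ → ℝ} {w S f : ℝ → ℝ} {C κ R : ℝ} (hT : ∀ p, Integrable (T p))
    (hw : Measurable w)
    (hw0 : ∀ q, 0 ≤ w q) (hwS : ∀ q, w q ≤ S q) (hSC : ∀ q, S q ≤ C) (hS : Measurable S)
    (hκ : ∀ p, (∫ q, |T p q| * S q) ≤ κ)
    (hR : (((∀ p q, 0 ≤ T p q) ∨ (∀ p q, T p q ≤ 0)) ∧ κ < 1 ∧ R = 1 - κ) ∨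
          (κ < 1 / 2 ∧ R = (1 - 2 * κ) / (1 - κ)))
    (hf : Measurable f) (hb : ∃ B, ∀ q, |f q| ≤ B)
    (heq : ∀ p, f p = 1 + ∫ q, T p q * (w q * f q)) :
    ∀ p, R ≤ f p ∧ |f p| ≤ 1 / (1 - κ) := by
  have hκ1 : κ < 1 := by
    rcases hR with h | h
    · exact h.2.1
    · linarith [h.1]
  have hκ0 : 0 ≤ κ := (integral_nonneg fun q =>
    mul_nonneg (abs_nonneg _) ((hw0 q).trans (hwS q))).trans (hκ 0)
  have hup : ∀ p, |f p| ≤ 1 / (1 - κ) := by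
    refine contract hb hκ1 fun B hB p => ?_
    rw [heq p]
    refine (abs_add_le _ _).trans ?_
    rw [abs_one]
    linarith [abs_int_le (hT p) hw hw0 hwS hSC hS (hκ p) hB]
  refine fun p => ⟨?_, hup p⟩
  obtain ⟨B0, hB0⟩ := hb
  have hg : ∃ C, ∀ p, |max (-f p) 0| ≤ C := ⟨B0, fun p => by
    rw [abs_of_nonneg (le_max_right _ _)]
    exact max_le ((neg_le_abs _).trans (hB0 p)) ((abs_nonneg _).trans (hB0 p))⟩
  have key : ∀ B, (∀ q, |max (-f q) 0| ≤ B) → 0 ≤ B ∧ ∀ q, -f q ≤ B := fun B h =>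
    ⟨(abs_nonneg _).trans (h 0), fun q => (le_max_left _ _).trans ((le_abs_self _).trans (h q))⟩
  have fin : (∀ p, |max (-f p) 0| ≤ 0 / (1 - κ)) → ∀ p, 0 ≤ f p := fun h p => by
    have h1 := h p
    rw [zero_div] at h1
    have := (le_max_left (-f p) 0).trans ((le_abs_self _).trans h1)
    linarith
  have hneg : ∀ (p : ℝ) (T' : ℝ → ℝ), ∫ q, T' q * (w q * (-f q)) = - ∫ q, T' q * (w q * f q) := by
    intro p T'
    rw [← integral_neg]; congr 1; ext q; ring
  rcases hR with ⟨hs | hs, -, rfl⟩ | ⟨hk, rfl⟩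
  · have hlow : ∀ b, 0 ≤ b → (∀ q, -f q ≤ b) → ∀ p, 1 - κ * b ≤ f p := by
      intro b hb hfb p
      have := int_le_pos (f := fun q => - f q) (hT p) (hs p) hw hw0 hwS hSC hS (hκ p) hf.neg
        (B := B0) (fun q => by rw [abs_neg]; exact hB0 q) hb hfb
      rw [hneg p] at this
      rw [heq p]; linarith
    have h0 : ∀ p, 0 ≤ f p := fin (contract hg hκ1 fun B hB p => by
      obtain ⟨hB1, hB2⟩ := key B hB
      have := hlow B hB1 hB2 p
      rw [abs_of_nonneg (le_max_right _ _)]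
      exact max_le (by linarith) (by nlinarith))
    have := hlow 0 le_rfl (fun q => by linarith [h0 q]) p
    linarith
  · have hnT : ∀ p, Integrable fun q => -T p q := fun p => (hT p).neg
    have hnκ : ∀ p, (∫ q, |-T p q| * S q) ≤ κ := fun p => by simpa only [abs_neg] using hκ p
    have hn2 : ∀ p, ∫ q, -T p q * (w q * f q) = - ∫ q, T p q * (w q * f q) := by
      intro p
      rw [← integral_neg]; congr 1; ext q; ring
    have hupp : ∀ b, 0 ≤ b → (∀ q, -f q ≤ b) → ∀ p, f p ≤ 1 + κ * b := by
      intro b hb hfb p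
      have := int_le_pos (f := fun q => - f q) (hnT p) (fun q => by linarith [hs p q]) hw hw0 hwS
        hSC hS (hnκ p) hf.neg
        (B := B0) (fun q => by rw [abs_neg]; exact hB0 q) hb hfb
      rw [hneg p, hn2] at this
      rw [heq p]; linarith
    have hlow : ∀ b, 0 ≤ b → (∀ q, f q ≤ b) → ∀ p, 1 - κ * b ≤ f p := by
      intro b hb hfb p
      have := int_le_pos (hnT p) (fun q => by linarith [hs p q]) hw hw0 hwS
        hSC hS (hnκ p) hf (B := B0) hB0 hb hfb
      rw [hn2] at this
      rw [heq p]; linarith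
    have h0 : ∀ p, 0 ≤ f p := fin (contract hg hκ1 fun B hB p => by
      obtain ⟨hB1, hB2⟩ := key B hB
      have := hlow _ (by positivity) (hupp B hB1 hB2) p
      rw [abs_of_nonneg (le_max_right _ _)]
      have h3 : κ * κ ≤ κ := by nlinarith
      have h4 : κ * κ * B ≤ κ * B := mul_le_mul_of_nonneg_right h3 hB1
      exact max_le (by linarith) (by nlinarith))
    have h1 := hupp 0 le_rfl (fun q => by linarith [h0 q])
    have := hlow 1 zero_le_one (fun q => by linarith [h1 q]) p
    linarith
  · have h1 := abs_int_le (hT p) hw hw0 hwS hSC hS (hκ p) hup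
    have h2 := (abs_le.1 h1).1
    have : (1 - 2 * κ) / (1 - κ) = 1 - κ * (1 / (1 - κ)) := by
      have : 1 - κ ≠ 0 := by linarith
      field_simp; ring
    rw [this, heq p]; linarith

/-- Uniqueness for the dressing equation. -/
lemma dressing_unique {T : ℝ → ℝ → ℝ} {w S f g : ℝ → ℝ} {C κ : ℝ} (hT : ∀ p, Integrable (T p))
    (hw : Measurable w)
    (hw0 : ∀ q, 0 ≤ w q) (hwS : ∀ q, w q ≤ S q) (hSC : ∀ q, S q ≤ C) (hS : Measurable S)
    (hκ : ∀ p, (∫ q, |T p q| * S q) ≤ κ) (hκ1 : κ < 1)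
    (hf : Measurable f) (hb : ∃ B, ∀ q, |f q| ≤ B)
    (heq : ∀ p, f p = 1 + ∫ q, T p q * (w q * f q))
    (hg : Measurable g) (hgb : ∃ B, ∀ q, |g q| ≤ B)
    (hgeq : ∀ p, g p = 1 + ∫ q, T p q * (w q * g q)) : ∀ p, f p = g p := by
  obtain ⟨B, hB⟩ := hb
  obtain ⟨B', hB'⟩ := hgb
  have h := contract (f := fun p => f p - g p) (κ := κ) (a := 0)
    ⟨B + B', fun p => (abs_sub _ _).trans (add_le_add (hB p) (hB' p))⟩ hκ1 (fun b hb p => by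
      have : f p - g p = ∫ q, T p q * (w q * (f q - g q)) := by
        rw [heq p, hgeq p, add_sub_add_left_eq_sub, ← integral_sub
          (int_aux (hT p) hw hw0 (fun q => (hwS q).trans (hSC q)) hf hB)
          (int_aux (hT p) hw hw0 (fun q => (hwS q).trans (hSC q)) hg hB')]
        congr 1; ext q; ring
      simp only [this, zero_add]
      exact abs_int_le (hT p) hw hw0 hwS hSC hS (hκ p) hb)
  intro p
  have := h p
  rw [zero_div] at this
  exact sub_eq_zero.1 (abs_nonpos_iff.1 this)


lemma ii {m : ℝ → ℝ} {s : ℝ} (hm : Measurable m) (h0 : ∀ y, 0 ≤ m y)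
    (hs : ∀ y, m y ≤ s) (a b : ℝ) : IntervalIntegrable m volume a b := by
  refine (intervalIntegrable_const (c := s)).mono_fun hm.aestronglyMeasurable
    (Filter.Eventually.of_forall fun y => ?_)
  show ‖m y‖ ≤ ‖s‖
  rw [Real.norm_of_nonneg (h0 y), Real.norm_eq_abs]
  exact (hs y).trans (le_abs_self s)

lemma quot_bounds {m : ℝ → ℝ} {s : ℝ} (hm : Measurable m) (h0 : ∀ y, 0 ≤ m y)
    (hs : ∀ y, m y ≤ s) (a b : ℝ) :
    0 ≤ ((∫ y in (0:ℝ)..a, m y) - ∫ y in (0:ℝ)..b, m y) / (a - b) ∧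
    ((∫ y in (0:ℝ)..a, m y) - ∫ y in (0:ℝ)..b, m y) / (a - b) ≤ s := by
  have main : ∀ a b : ℝ, b < a →
      0 ≤ ((∫ y in (0:ℝ)..a, m y) - ∫ y in (0:ℝ)..b, m y) / (a - b) ∧
      ((∫ y in (0:ℝ)..a, m y) - ∫ y in (0:ℝ)..b, m y) / (a - b) ≤ s := by
    intro a b hab
    rw [intervalIntegral.integral_interval_sub_left (ii hm h0 hs _ _) (ii hm h0 hs _ _)]
    have hpos : 0 < a - b := sub_pos.2 hab
    constructor
    · exact div_nonneg (intervalIntegral.integral_nonneg hab.le fun y _ => h0 y) hpos.le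
    · rw [div_le_iff₀ hpos]
      have := intervalIntegral.integral_mono_on hab.le (ii hm h0 hs b a)
        (intervalIntegrable_const (c := s)) (fun y _ => hs y)
      rw [intervalIntegral.integral_const, smul_eq_mul] at this
      linarith
  rcases lt_trichotomy b a with h | h | h
  · exact main a b h
  · subst h; simp [(h0 0).trans (hs 0)]
  · have := main b a h
    rw [← neg_sub, ← neg_sub b a, neg_div_neg_eq]
    exact this

lemma N_meas {m : ℝ → ℝ → ℝ} {C : ℝ} (hm : Measurable (Function.uncurry m))
    (h0 : ∀ y q, 0 ≤ m y q) (hC : ∀ y q, m y q ≤ C) :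
    Measurable (Function.uncurry fun a q => ∫ y in (0:ℝ)..a, m y q) := by
  refine measurable_uncurry_of_continuous_of_measurable (fun q => ?_) (fun a => ?_)
  · exact intervalIntegral.continuous_primitive
      (fun a b => ii (m := fun y => m y q) (hm.comp (by fun_prop : Measurable fun y : ℝ => (y, q)))
        (fun y => h0 y q) (fun y => hC y q) a b) 0
  · have hm' : Measurable (Function.uncurry fun q y => m y q) := hm.comp measurable_swap
    simp only [intervalIntegral]
    refine Measurable.sub ?_ ?_
    · exact (hm'.stronglyMeasurable.integral_prod_right).measurable
    · exact (hm'.stronglyMeasurable.integral_prod_right).measurable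

open Filter Topology in
lemma core {T m X f : ℝ → ℝ → ℝ} {S u : ℝ → ℝ} {C K κ R : ℝ} (hT : ∀ p, Integrable (T p))
    (hm : Measurable (Function.uncurry m)) (hm0 : ∀ y q, 0 ≤ m y q) (hmS : ∀ y q, m y q ≤ S q)
    (hSC : ∀ q, S q ≤ C) (hS : Measurable S) (hu : Measurable u)
    (huK : ∀ y q, |u q| * m y q ≤ K)
    (hκ : ∀ p, (∫ q, |T p q| * S q) ≤ κ) (hRpos : 0 < R)
    (hR : (((∀ p q, 0 ≤ T p q) ∨ (∀ p q, T p q ≤ 0)) ∧ κ < 1 ∧ R = 1 - κ) ∨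
          (κ < 1 / 2 ∧ R = (1 - 2 * κ) / (1 - κ)))
    (hX : ∀ x p, X x p = x + ∫ q, T p q * ∫ y in (0:ℝ)..(X x q - u q), m y q)
    (hXm : ∀ x, Measurable (X x)) (hXb : ∀ x, ∃ B, ∀ p, |X x p| ≤ B)
    (hfm : ∀ x, Measurable (f x)) (hfb : ∀ x, ∃ B, ∀ p, |f x p| ≤ B)
    (hf : ∀ x p, f x p = 1 + ∫ q, T p q * (m (X x q - u q) q * f x q)) :
    (∀ p x x', X x p - X x' p = ∫ y in x'..x, f y p) ∧
    (∀ p x y, y < x → R ≤ (X x p - X y p) / (x - y)) ∧ (∀ p, Continuous fun x => X x p) := by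
  have hκ1 : κ < 1 := by
    rcases hR with h | h
    · exact h.2.1
    · linarith [h.1]
  have hmC : ∀ y q, m y q ≤ C := fun y q => (hmS y q).trans (hSC q)
  have hmq : ∀ q, Measurable fun y => m y q := fun q =>
    hm.comp (by fun_prop : Measurable fun y : ℝ => (y, q))
  set N : ℝ → ℝ → ℝ := fun a q => ∫ y in (0:ℝ)..a, m y q with hN
  have hNm : Measurable (Function.uncurry N) := N_meas hm hm0 hmC
  have hX' : ∀ x p, X x p = x + ∫ q, T p q * N (X x q - u q) q := hX
  have hNX : ∀ x, Measurable fun q => N (X x q - u q) q := fun x =>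
    hNm.comp (((hXm x).sub hu).prodMk measurable_id)
  have hNint : ∀ x p, Integrable fun q => T p q * N (X x q - u q) q := by
    intro x p
    obtain ⟨B, hB⟩ := hXb x
    have hC0 : 0 ≤ C := (hm0 0 0).trans (hmC 0 0)
    have hB0 : 0 ≤ B := (abs_nonneg _).trans (hB 0)
    have hK0 : 0 ≤ K := (mul_nonneg (abs_nonneg _) (hm0 0 0)).trans (huK 0 0)
    refine (hT p).mul_bdd (c := C * B + K) (hNX x).aestronglyMeasurable
      (Eventually.of_forall fun q => ?_)
    by_cases hz : X x q - u q = 0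
    · simp only [hN, hz, intervalIntegral.integral_same, norm_zero]; positivity
    have hz' : 0 < |X x q - u q| := abs_pos.2 hz
    have := intervalIntegral.norm_integral_le_of_norm_le_const (a := 0) (b := X x q - u q)
      (f := fun y => m y q) (C := (C * B + K) / |X x q - u q|) (fun y _ => by
        rw [le_div_iff₀ hz', Real.norm_of_nonneg (hm0 y q)]
        have h1 : |X x q - u q| ≤ B + |u q| := (abs_sub _ _).trans (by linarith [hB q])
        calc m y q * |X x q - u q| ≤ m y q * (B + |u q|) :=
              mul_le_mul_of_nonneg_left h1 (hm0 y q)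
          _ = m y q * B + |u q| * m y q := by ring
          _ ≤ C * B + K := add_le_add (mul_le_mul_of_nonneg_right (hmC y q) hB0) (huK y q))
    rwa [sub_zero, div_mul_cancel₀ _ hz'.ne'] at this
  -- quotients
  set w : ℝ → ℝ → ℝ → ℝ := fun x x' q =>
    (N (X x q - u q) q - N (X x' q - u q) q) / (X x q - X x' q) with hw
  have hwm : ∀ x x', Measurable (w x x') := fun x x' =>
    ((hNX x).sub (hNX x')).div ((hXm x).sub (hXm x'))
  have hwb : ∀ x x' q, 0 ≤ w x x' q ∧ w x x' q ≤ S q := by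
    intro x x' q
    have := quot_bounds (hmq q) (fun y => hm0 y q) (fun y => hmS y q) (X x q - u q) (X x' q - u q)
    rwa [sub_sub_sub_cancel_right] at this
  have hwD : ∀ x x' q, w x x' q * (X x q - X x' q) = N (X x q - u q) q - N (X x' q - u q) q := by
    intro x x' q
    by_cases h : X x q - X x' q = 0
    · rw [h, mul_zero, sub_eq_zero.1 h, sub_self]
    · exact div_mul_cancel₀ _ h
  set d : ℝ → ℝ → ℝ → ℝ := fun x x' q => (X x q - X x' q) / (x - x') with hd
  have hdm : ∀ x x', Measurable (d x x') := fun x x' => ((hXm x).sub (hXm x')).div_const _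
  have hdb : ∀ x x', ∃ B, ∀ q, |d x x' q| ≤ B := by
    intro x x'
    obtain ⟨B, hB⟩ := hXb x
    obtain ⟨B', hB'⟩ := hXb x'
    refine ⟨(B + B') / |x - x'|, fun q => ?_⟩
    rw [hd]; simp only [abs_div]
    exact div_le_div_of_nonneg_right ((abs_sub _ _).trans (add_le_add (hB q) (hB' q)))
      (abs_nonneg _)
  have hdeq : ∀ x x', x ≠ x' → ∀ p, d x x' p = 1 + ∫ q, T p q * (w x x' q * d x x' q) := by
    intro x x' hne p
    have hne' : x - x' ≠ 0 := sub_ne_zero.2 hne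
    have h1 : X x p - X x' p = (x - x') + ∫ q, T p q * (w x x' q * (X x q - X x' q)) := by
      simp only [hwD, mul_sub]
      rw [integral_sub (hNint x p) (hNint x' p), hX' x p, hX' x' p]
      ring
    simp only [hd]
    rw [h1, add_div, div_self hne', ← integral_div]
    congr 2; ext q; ring
  have hbound : ∀ x x', x ≠ x' → ∀ p, R ≤ d x x' p ∧ |d x x' p| ≤ 1 / (1 - κ) := fun x x' hne =>
    dressing hT (hwm x x') (fun q => (hwb x x' q).1) (fun q => (hwb x x' q).2) hSC hS hκ hR
      (hdm x x') (hdb x x') (hdeq x x' hne)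
  have hL0 : 0 ≤ 1 / (1 - κ) := by
    have : 0 < 1 - κ := by linarith
    positivity
  have hlip : ∀ p, LipschitzWith (1 / (1 - κ)).toNNReal fun x => X x p := by
    intro p
    refine LipschitzWith.of_dist_le_mul fun x y => ?_
    rw [Real.coe_toNNReal _ hL0, Real.dist_eq, Real.dist_eq]
    rcases eq_or_ne x y with rfl | hne
    · simp
    have := (hbound x y hne p).2
    simp only [hd, abs_div] at this
    rwa [div_le_iff₀ (abs_pos.2 (sub_ne_zero.2 hne))] at this
  have hcont : ∀ p, Continuous fun x => X x p := fun p => (hlip p).continuous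
  have hanti : ∀ p, AntilipschitzWith R⁻¹.toNNReal fun x => X x p - u p := by
    intro p
    refine AntilipschitzWith.of_le_mul_dist fun x y => ?_
    rw [Real.coe_toNNReal _ (by positivity), Real.dist_eq, Real.dist_eq, sub_sub_sub_cancel_right]
    rcases eq_or_ne x y with rfl | hne
    · simp
    have := (hbound x y hne p).1.trans (le_abs_self _)
    simp only [hd, abs_div] at this
    rw [le_div_iff₀ (abs_pos.2 (sub_ne_zero.2 hne))] at this
    rw [inv_mul_eq_div, le_div_iff₀ hRpos]
    linarith
  have hXne : ∀ x x' q, x ≠ x' → X x q ≠ X x' q := by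
    intro x x' q hne h
    have := (hbound x x' hne q).1
    simp only [hd, h, sub_self, zero_div] at this
    linarith
  refine ⟨?_, fun p x y hxy => (hbound x y hxy.ne' p).1, hcont⟩
  -- the derivative
  have hXj : Measurable (Function.uncurry X) :=
    measurable_uncurry_of_continuous_of_measurable hcont hXm
  set h : ℕ → ℝ := fun k => 1 / ((k : ℝ) + 1) with hh
  have hh0 : Tendsto h atTop (𝓝 0) := tendsto_one_div_add_atTop_nhds_zero_nat
  have hhpos : ∀ k, 0 < h k := fun k => by simp only [hh]; positivity
  have hXs : ∀ k, Measurable fun z : ℝ × ℝ => X (z.1 + h k) z.2 := fun k =>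
    hXj.comp (by fun_prop : Measurable fun z : ℝ × ℝ => (z.1 + h k, z.2))
  have hX1 : Measurable fun z : ℝ × ℝ => X z.1 z.2 := hXj
  have hu2 : Measurable fun z : ℝ × ℝ => u z.2 := hu.comp measurable_snd
  have hdj : ∀ k, Measurable fun z : ℝ × ℝ => d (z.1 + h k) z.1 z.2 := by
    intro k
    exact ((hXs k).sub hX1).div ((measurable_fst.add_const _).sub measurable_fst)
  have hwj : ∀ k, Measurable fun z : ℝ × ℝ => w (z.1 + h k) z.1 z.2 := by
    intro k
    refine Measurable.div (Measurable.sub ?_ ?_) ((hXs k).sub hX1)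
    · exact hNm.comp (((hXs k).sub hu2).prodMk measurable_snd)
    · exact hNm.comp ((hX1.sub hu2).prodMk measurable_snd)
  have hmj : Measurable fun z : ℝ × ℝ => m (X z.1 z.2 - u z.2) z.2 :=
    hm.comp ((hX1.sub hu2).prodMk measurable_snd)
  have hshift : ∀ x : ℝ, Tendsto (fun k => x + h k) atTop (𝓝[≠] x) := by
    intro x
    refine tendsto_nhdsWithin_iff.2 ⟨by simpa using hh0.const_add x, Eventually.of_forall fun k => ?_⟩
    simp [(hhpos k).ne']
  have hgood1 : ∀ᵐ x, ∀ᵐ q, Tendsto (fun k => w (x + h k) x q) atTop (𝓝 (m (X x q - u q) q)) := by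
    rw [Measure.ae_ae_comm (measurableSet_tendsto_fun hwj hmj)]
    refine Eventually.of_forall fun q => ?_
    have hloc : LocallyIntegrable (fun y => m y q) := by
      refine (locallyIntegrable_const C).mono (hmq q).aestronglyMeasurable
        (Eventually.of_forall fun y => ?_)
      rw [Real.norm_of_nonneg (hm0 y q), Real.norm_eq_abs]
      exact (hmC y q).trans (le_abs_self _)
    have hae := _root_.LocallyIntegrable.ae_hasDerivAt_integral hloc
    have hpre : ∀ᵐ x, ∀ c, HasDerivAt (fun y => ∫ s in c..y, m s q) (m (X x q - u q) q)
        (X x q - u q) := by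
      rw [ae_iff] at hae ⊢
      have h3 := (hanti q).hausdorffMeasure_preimage_le (d := 1) zero_le_one
        {a | ¬ ∀ c, HasDerivAt (fun y => ∫ s in c..y, m s q) (m a q) a}
      rw [hausdorffMeasure_real, hae, mul_zero] at h3
      exact le_antisymm h3 zero_le
    filter_upwards [hpre] with x hx
    have h1 := hasDerivAt_iff_tendsto_slope.1 (hx 0)
    have h2 : Tendsto (fun k => X (x + h k) q - u q) atTop (𝓝[≠] (X x q - u q)) := by
      refine tendsto_nhdsWithin_iff.2 ⟨?_, Eventually.of_forall fun k => ?_⟩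
      · exact (((hcont q).tendsto x).comp ((hshift x).mono_right nhdsWithin_le_nhds)).sub_const _
      · have := hXne (x + h k) x q (by simp [(hhpos k).ne'])
        simpa [sub_left_inj] using this
    refine (h1.comp h2).congr fun k => ?_
    simp only [Function.comp, slope_def_field, sub_sub_sub_cancel_right, hw, hN]
  have hderiv : ∀ p, ∀ᵐ x, Tendsto (fun k => d (x + h k) x p) atTop (𝓝 (deriv (fun x => X x p) x)) := by
    intro p
    filter_upwards [(hlip p).ae_differentiableAt_real] with x hx
    have h1 := (hasDerivAt_iff_tendsto_slope.1 hx.hasDerivAt).comp (hshift x)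
    refine h1.congr fun k => ?_
    simp only [Function.comp, slope_def_field, hd]
  have hgood2 : ∀ᵐ x, ∀ᵐ q, ∃ l, Tendsto (fun k => d (x + h k) x q) atTop (𝓝 l) := by
    rw [Measure.ae_ae_comm (measurableSet_exists_tendsto hdj)]
    refine Eventually.of_forall fun q => ?_
    filter_upwards [hderiv q] with x hx using ⟨_, hx⟩
  have hlim : ∀ᵐ x, ∀ p, Tendsto (fun k => d (x + h k) x p) atTop (𝓝 (f x p)) := by
    filter_upwards [hgood1, hgood2] with x hx1 hx2
    have hne : ∀ k, x + h k ≠ x := fun k => by simp [(hhpos k).ne']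
    obtain ⟨l, hl⟩ : ∃ l : ℝ → ℝ, ∀ᵐ q, Tendsto (fun k => d (x + h k) x q) atTop (𝓝 (l q)) := by
      classical
      refine ⟨fun q => if hq : ∃ l, Tendsto (fun k => d (x + h k) x q) atTop (𝓝 l) then hq.choose
        else 0, ?_⟩
      filter_upwards [hx2] with q hq
      rw [dif_pos hq]; exact hq.choose_spec
    set g : ℝ → ℝ := fun p => 1 + ∫ q, T p q * (m (X x q - u q) q * l q) with hg
    have hdg : ∀ p, Tendsto (fun k => d (x + h k) x p) atTop (𝓝 (g p)) := by
      intro p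
      have : Tendsto (fun k => ∫ q, T p q * (w (x + h k) x q * d (x + h k) x q)) atTop
          (𝓝 (∫ q, T p q * (m (X x q - u q) q * l q))) := by
        refine tendsto_integral_of_dominated_convergence (fun q => |T p q| * (C * (1 / (1 - κ))))
          (fun k => ?_) ((hT p).abs.mul_const _) (fun k => Eventually.of_forall fun q => ?_) ?_
        · exact (hT p).aestronglyMeasurable.mul ((hwm _ _).mul (hdm _ _)).aestronglyMeasurable
        · rw [norm_mul, norm_mul, Real.norm_eq_abs, Real.norm_of_nonneg (hwb _ _ q).1, Real.norm_eq_abs]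
          refine mul_le_mul_of_nonneg_left ?_ (abs_nonneg _)
          have hb := hwb (x + h k) x q
          exact mul_le_mul (hb.2.trans (hSC q)) (hbound _ _ (hne k) q).2 (abs_nonneg _)
            (hb.1.trans (hb.2.trans (hSC q)))
        · filter_upwards [hx1, hl] with q h1 h2
          exact (h1.mul h2).const_mul _
      refine (this.const_add 1).congr fun k => (hdeq _ _ (hne k) p).symm
    have hgl : ∀ᵐ q, l q = g q := by
      filter_upwards [hl] with q hq using tendsto_nhds_unique hq (hdg q)
    have hgm : Measurable g := measurable_of_tendsto_metrizable (fun k => hdm (x + h k) x)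
      (tendsto_pi_nhds.2 hdg)
    have hgb : ∀ q, |g q| ≤ 1 / (1 - κ) := fun q =>
      le_of_tendsto (hdg q).abs (Eventually.of_forall fun k => (hbound _ _ (hne k) q).2)
    have hgeq : ∀ p, g p = 1 + ∫ q, T p q * (m (X x q - u q) q * g q) := by
      intro p
      simp only [hg]
      congr 1
      refine integral_congr_ae ?_
      filter_upwards [hgl] with q hq
      rw [hq]
    have hfg := dressing_unique hT (hm.comp (((hXm x).sub hu).prodMk measurable_id))
      (fun q => hm0 _ _) (fun q => hmS _ _) hSC hS hκ hκ1 (hfm x) (hfb x) (hf x) hgm ⟨_, hgb⟩ hgeq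
    intro p
    rw [hfg p]; exact hdg p
  intro p x x'
  have hac := ((hlip p).lipschitzOnWith (s := Set.uIcc x' x)).absolutelyContinuousOnInterval
  rw [← hac.integral_deriv_eq_sub]
  refine intervalIntegral.integral_congr_ae ?_
  filter_upwards [hlim, hderiv p] with y h1 h2 _
  exact tendsto_nhds_unique h2 (h1 p)

end S14



/-- Let `X̂` solve the fixed-point problem and let
`n(t,x,p) = n₀(X₀(X̂(t,x,p) - v(p)t, p), p)`. Then the extended space-derivative of `X̂`
equals the dressing `1^dr(t,x,·)` of the constant `1` with respect to `n(t,x,·)`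
(expressed as the integral identity `X̂(t,x,p) - X̂(t,x',p) = ∫_{x'}^x 1^dr(t,y,p) dy`);
consequently for all `t`, `x > y`, `p`: `(X̂(t,x,p) - X̂(t,y,p))/(x-y) ≥ R(κ₀) > 0`, so
`X̂(t,·,p)` is strictly increasing and a homeomorphism of ℝ. -/
theorem stmt_14
    (T : ℝ → ℝ → ℝ) (n₀ : ℝ → ℝ → ℝ) (v : ℝ → ℝ) (N0 X0 : ℝ → ℝ → ℝ)
    (Xhat onedr : ℝ → ℝ → ℝ → ℝ) (κ₀ Rκ Cv : ℝ)
    (hT_meas : Measurable (Function.uncurry T))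
    (hT_int : ∀ p, Integrable (fun q => T p q))
    (hT_op : ∃ M, ∀ p, (∫ q, |T p q|) ≤ M)
    (hn_meas : Measurable (Function.uncurry n₀))
    (hn_nonneg : ∀ x p, 0 ≤ n₀ x p)
    (hn_bdd : ∃ C, ∀ x p, n₀ x p ≤ C)
    (hsup_meas : Measurable (fun q => ⨆ x, n₀ x q))
    (hκ₀ : ∀ p, (∫ q, |T p q| * ⨆ x, n₀ x q) ≤ κ₀)
    (hR : (((∀ p q, 0 ≤ T p q) ∨ (∀ p q, T p q ≤ 0)) ∧ κ₀ < 1 ∧ Rκ = 1 - κ₀) ∨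
          (κ₀ < 1 / 2 ∧ Rκ = (1 - 2 * κ₀) / (1 - κ₀)))
    (hv_meas : Measurable v)
    (hCv : ∀ x p, |v p| * n₀ x p ≤ Cv)
    (hX0_meas : Measurable (Function.uncurry X0))
    (hN0 : ∀ xh p, N0 xh p = ∫ yh in (0:ℝ)..xh, n₀ (X0 yh p) p)
    (hXhat_eq : ∀ t x p, Xhat t x p = x + ∫ q, T p q * N0 (Xhat t x q - v q * t) q)
    (hXhat_meas : ∀ t x, Measurable fun p => Xhat t x p)
    (hXhat_bdd : ∀ t x, ∃ C, ∀ p, |Xhat t x p| ≤ C)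
    (h1_meas : ∀ t x, Measurable fun p => onedr t x p)
    (h1_bdd : ∃ C, ∀ t x p, |onedr t x p| ≤ C)
    (h1_eq : ∀ t x p, onedr t x p
      = 1 + ∫ q, T p q * (n₀ (X0 (Xhat t x q - v q * t) q) q * onedr t x q)) :
    -- the extended x-derivative of X̂ is 1^dr:
    (∀ t p x x', Xhat t x p - Xhat t x' p = ∫ y in x'..x, onedr t y p) ∧
    (0 < Rκ) ∧
    (∀ t p x y, y < x → Rκ ≤ (Xhat t x p - Xhat t y p) / (x - y)) ∧
    (∀ t p, StrictMono fun x => Xhat t x p) ∧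
    (∀ t p, Function.Bijective fun x => Xhat t x p) ∧
    (∀ t p, Continuous fun x => Xhat t x p) := by
  have hκ1 : κ₀ < 1 := by
    rcases hR with h | h
    · exact h.2.1
    · linarith [h.1]
  have hRpos : 0 < Rκ := by
    rcases hR with ⟨-, h1, rfl⟩ | ⟨h1, rfl⟩
    · linarith
    · exact div_pos (by linarith) (by linarith)
  obtain ⟨C, hC⟩ := hn_bdd
  have hle : ∀ y q, n₀ y q ≤ ⨆ x, n₀ x q := fun y q =>
    le_ciSup (f := fun x => n₀ x q) ⟨C, by rintro _ ⟨z, rfl⟩; exact hC z q⟩ y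
  have main := fun t => S14.core (T := T) (m := fun y q => n₀ (X0 y q) q) (X := Xhat t)
    (f := onedr t) (S := fun q => ⨆ x, n₀ x q) (u := fun q => v q * t) (C := C) (K := Cv * |t|)
    (κ := κ₀) (R := Rκ) hT_int
    (hn_meas.comp (hX0_meas.prodMk measurable_snd)) (fun _ _ => hn_nonneg _ _)
    (fun _ _ => hle _ _) (fun q => ciSup_le fun x => hC x q) hsup_meas (hv_meas.mul_const t)
    (fun y q => by
      rw [abs_mul]
      have := mul_le_mul_of_nonneg_right (hCv (X0 y q) q) (abs_nonneg t)
      linarith) hκ₀ hRpos hR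
    (fun x p => by simpa only [hN0] using hXhat_eq t x p)
    (hXhat_meas t) (hXhat_bdd t) (h1_meas t)
    (fun x => by obtain ⟨B, hB⟩ := h1_bdd; exact ⟨B, hB t x⟩) (h1_eq t)
  have hmono : ∀ t p, StrictMono fun x => Xhat t x p := by
    intro t p y x hyx
    have h1 := (main t).2.1 p x y hyx
    rw [le_div_iff₀ (sub_pos.2 hyx)] at h1
    have := mul_pos hRpos (sub_pos.2 hyx)
    show Xhat t y p < Xhat t x p
    linarith
  refine ⟨fun t => (main t).1, hRpos, fun t => (main t).2.1, hmono, fun t p =>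
    ⟨(hmono t p).injective, ?_⟩, fun t => (main t).2.2⟩
  refine ((main t).2.2 p).surjective ?_ ?_
  · refine Filter.tendsto_atTop_mono' _ ?_ (Filter.tendsto_atTop_add_const_right _ (Xhat t 0 p)
      (Filter.tendsto_id.const_mul_atTop hRpos))
    filter_upwards [Filter.eventually_gt_atTop 0] with x hx
    have h1 := (main t).2.1 p x 0 hx
    rw [le_div_iff₀ (sub_pos.2 hx)] at h1
    simp only [id]
    linarith
  · refine Filter.tendsto_atBot_mono' _ ?_ (Filter.tendsto_atBot_add_const_right _ (Xhat t 0 p)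
      (Filter.tendsto_id.const_mul_atBot hRpos))
    filter_upwards [Filter.eventually_lt_atBot 0] with x hx
    have h1 := (main t).2.1 p 0 x hx
    rw [le_div_iff₀ (sub_pos.2 hx)] at h1
    simp only [id]
    linarith
end

section
/- Uniqueness of the initial coordinate change: suppose f(x,p) is, for each p, absolutely continuous in x with f(0,p) = 0, x ↦ f(x,·) ∈ B(ℝ) well-defined, and satisfies ∂̌f(x,p)/∂̌x = 1^dr[f](x,p) for all x,p, where 1^dr[f](x,·) is the dressing of 1 with respect to the occupation function ñ_f(x,p) = n₀(X₀(f(x,p),p),p). Then f is unique; in particular f(x,p) = X̂₀(x,p) = ∫₀ˣ 1^dr₀(y,p) dy, and the fixed-point solution at time zero satisfies X̂(0,x,p) = X̂₀(x,p) and n(0,x,p) = n₀(x,p) for all x,p. -/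
open MeasureTheory

lemma aux_intervalIntegrable {g : ℝ → ℝ} (hg : Measurable g) {C : ℝ} (hC : ∀ y, |g y| ≤ C)
    (a b : ℝ) : IntervalIntegrable g volume a b := by
  refine (intervalIntegrable_const (c := C)).mono_fun hg.aestronglyMeasurable ?_
  refine Filter.Eventually.of_forall fun y => ?_
  have h1 := hC y
  have h0 := abs_nonneg (g y)
  simp only [Real.norm_eq_abs]
  exact h1.trans (le_abs_self C)

lemma aux_lip {g : ℝ → ℝ} (hg : Measurable g) {C : ℝ} (hC : ∀ y, |g y| ≤ C) (a b : ℝ) :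
    |(∫ y in (0:ℝ)..a, g y) - ∫ y in (0:ℝ)..b, g y| ≤ C * |a - b| := by
  rw [intervalIntegral.integral_interval_sub_left (aux_intervalIntegrable hg hC _ _)
    (aux_intervalIntegrable hg hC _ _)]
  exact intervalIntegral.norm_integral_le_of_norm_le_const (f := g) (fun y _ => hC y)

lemma aux_lipschitz {g : ℝ → ℝ} (hg : Measurable g) {C : ℝ} (hC : ∀ y, |g y| ≤ C) :
    LipschitzWith C.toNNReal (fun x => ∫ y in (0:ℝ)..x, g y) := by
  have h0 : 0 ≤ C := (abs_nonneg _).trans (hC 0)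
  refine LipschitzWith.of_dist_le_mul fun a b => ?_
  rw [Real.dist_eq, Real.dist_eq, Real.coe_toNNReal _ h0]
  exact aux_lip hg hC a b

/-- change of variables, continuous integrand -/
lemma aux_cov_cont {g h : ℝ → ℝ} (hg : Measurable g) {C : ℝ} (hC : ∀ y, |g y| ≤ C)
    (hh : Continuous h) {D : ℝ} (hD : ∀ y, |h y| ≤ D) (x : ℝ) :
    (∫ y in (0:ℝ)..x, h (∫ z in (0:ℝ)..y, g z) * g y) = ∫ w in (0:ℝ)..(∫ z in (0:ℝ)..x, g z), h w := by
  set f : ℝ → ℝ := fun x => ∫ y in (0:ℝ)..x, g y with hf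
  set Φ : ℝ → ℝ := fun x => ∫ y in (0:ℝ)..x, h y with hΦ
  have hlip := (aux_lipschitz hh.measurable hD).comp (aux_lipschitz hg hC)
  have hac := (hlip.lipschitzOnWith (s := Set.uIcc 0 x)).absolutelyContinuousOnInterval
  have hint := hac.integral_deriv_eq_sub
  have hloc : LocallyIntegrable g volume := by
    refine (locallyIntegrable_const C).mono hg.aestronglyMeasurable ?_
    exact Filter.Eventually.of_forall fun y => (hC y).trans (le_abs_self C)
  have hae := LocallyIntegrable.ae_hasDerivAt_integral hloc
  have : (∫ y in (0:ℝ)..x, h (f y) * g y) = ∫ y in (0:ℝ)..x, deriv (Φ ∘ f) y := by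
    refine intervalIntegral.integral_congr_ae ?_
    filter_upwards [hae] with y hy _
    have h1 : HasDerivAt Φ (h (f y)) (f y) := hh.integral_hasStrictDerivAt 0 (f y) |>.hasDerivAt
    exact (h1.comp y (hy 0)).deriv.symm
  rw [this]
  refine hint.trans ?_
  simp [hf]

/-- change of variables, bounded measurable integrand, on `[a,b]` with `f` given. -/
lemma aux_cov_meas_aux {g f : ℝ → ℝ} (hg : Measurable g) {C : ℝ} (hC : ∀ y, |g y| ≤ C)
    (hf : Measurable f) (a b c d : ℝ) (hab : a ≤ b)
    (hcont : ∀ h : ℝ → ℝ, Continuous h → (∃ D, ∀ y, |h y| ≤ D) →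
      (∫ y in a..b, h (f y) * g y) = ∫ w in c..d, h w)
    (h : ℝ → ℝ) (hh : Measurable h) (D : ℝ) (hD : ∀ y, |h y| ≤ D) :
      (∫ y in a..b, h (f y) * g y) = ∫ w in c..d, h w := by
  let ρ (s : ℝ → ℝ) : Measure ℝ :=
    ((volume.restrict (Set.Ioc a b)).withDensity (fun y => ENNReal.ofReal (s y))).map f
  have hρfin : ∀ s : ℝ → ℝ, Measurable s → (∀ y, |s y| ≤ C) → IsFiniteMeasure (ρ s) := by
    intro s hs hsC
    have hi : Integrable s (volume.restrict (Set.Ioc a b)) :=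
      (intervalIntegrable_iff_integrableOn_Ioc_of_le hab).1 (aux_intervalIntegrable hs hsC a b)
    have := isFiniteMeasure_withDensity_ofReal hi.2
    exact Measure.isFiniteMeasure_map _ _
  have hρint : ∀ s : ℝ → ℝ, Measurable s → ∀ k : ℝ → ℝ, Measurable k →
      (∫ w, k w ∂(ρ s)) = ∫ y in Set.Ioc a b, max (s y) 0 * k (f y) := by
    intro s hs k hk
    rw [integral_map hf.aemeasurable hk.aestronglyMeasurable,
      integral_withDensity_eq_integral_toReal_smul hs.ennreal_ofReal (by simp)]
    simp [ENNReal.toReal_ofReal', smul_eq_mul]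
  have hn : Measurable (fun y => -g y) := hg.neg
  have hnC : ∀ y, |-g y| ≤ C := fun y => by rw [abs_neg]; exact hC y
  have := hρfin g hg hC
  have := hρfin _ hn hnC
  have hbi : ∀ (m : Measure ℝ) [IsFiniteMeasure m] (k : ℝ → ℝ), Measurable k →
      (∃ D, ∀ y, |k y| ≤ D) → Integrable k m := by
    rintro m _ k hk ⟨D, hD⟩
    exact Integrable.of_bound hk.aestronglyMeasurable D (Filter.Eventually.of_forall hD)
  have key : ∀ k : ℝ → ℝ, Measurable k → (∃ D, ∀ y, |k y| ≤ D) →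
      (∫ w, k w ∂(ρ g + volume.restrict (Set.Ioc d c)))
        - (∫ w, k w ∂(ρ (fun y => -g y) + volume.restrict (Set.Ioc c d)))
      = (∫ y in a..b, k (f y) * g y) - ∫ w in c..d, k w := by
    intro k hk hkb
    rw [integral_add_measure (hbi _ k hk hkb) (hbi _ k hk hkb),
      integral_add_measure (hbi _ k hk hkb) (hbi _ k hk hkb), hρint g hg k hk,
      hρint _ hn k hk, intervalIntegral.integral_of_le hab, intervalIntegral]
    obtain ⟨D, hD⟩ := hkb
    have hmi : ∀ s : ℝ → ℝ, Measurable s → (∀ y, |s y| ≤ C) →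
        Integrable (fun y => max (s y) 0 * k (f y)) (volume.restrict (Set.Ioc a b)) := by
      intro s hs hsC
      refine hbi _ _ ((hs.max measurable_const).mul (hk.comp hf)) ⟨C * D, fun y => ?_⟩
      rw [abs_mul]
      have h0 : 0 ≤ C := (abs_nonneg _).trans (hC 0)
      refine mul_le_mul ?_ (hD _) (abs_nonneg _) h0
      rw [abs_of_nonneg (le_max_right _ _)]
      exact max_le ((le_abs_self _).trans (hsC y)) h0
    have : (∫ y in Set.Ioc a b, k (f y) * g y) =
      (∫ y in Set.Ioc a b, max (g y) 0 * k (f y)) - ∫ y in Set.Ioc a b, max (-g y) 0 * k (f y) := by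
      rw [← integral_sub (hmi g hg hC) (hmi _ hn hnC)]
      congr 1
      ext y
      rw [← sub_mul, max_zero_sub_max_neg_zero_eq_self, mul_comm]
    rw [this]
    ring
  have hEq : ρ g + volume.restrict (Set.Ioc d c)
      = ρ (fun y => -g y) + volume.restrict (Set.Ioc c d) := by
    refine ext_of_forall_integral_eq_of_IsFiniteMeasure fun k => ?_
    have hkb : ∃ D, ∀ y, |k y| ≤ D := ⟨‖k‖, fun y => k.norm_coe_le_norm y⟩
    have h1 := key k k.continuous.measurable hkb
    rw [hcont k k.continuous hkb, sub_self] at h1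
    exact sub_eq_zero.1 h1
  have h2 := key h hh ⟨D, hD⟩
  rw [hEq, sub_self] at h2
  exact (sub_eq_zero.1 h2.symm)

lemma aux_cov {g h : ℝ → ℝ} (hg : Measurable g) {C : ℝ} (hC : ∀ y, |g y| ≤ C)
    (hh : Measurable h) {D : ℝ} (hD : ∀ y, |h y| ≤ D) (x : ℝ) :
    (∫ y in (0:ℝ)..x, h (∫ z in (0:ℝ)..y, g z) * g y) = ∫ w in (0:ℝ)..(∫ z in (0:ℝ)..x, g z), h w := by
  have hfm : Measurable (fun x => ∫ y in (0:ℝ)..x, g y) := (aux_lipschitz hg hC).continuous.measurable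
  rcases le_total 0 x with hx | hx
  · exact aux_cov_meas_aux hg hC hfm 0 x 0 _ hx
      (fun k hk ⟨D, hD⟩ => aux_cov_cont hg hC hk hD x) h hh D hD
  · have := aux_cov_meas_aux hg hC hfm x 0 (∫ z in (0:ℝ)..x, g z) 0 hx
      (fun k hk ⟨D, hD⟩ => by
        rw [intervalIntegral.integral_symm 0 x, intervalIntegral.integral_symm 0 (∫ z in (0:ℝ)..x, g z), neg_inj]
        exact aux_cov_cont hg hC hk hD x) h hh D hD
    rw [intervalIntegral.integral_symm 0 x, intervalIntegral.integral_symm 0 (∫ z in (0:ℝ)..x, g z), neg_inj] at this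
    exact this

lemma aux_zero {d : ℝ → ℝ} {κ D : ℝ} (h0 : 0 ≤ κ) (h1 : κ < 1) (hD : ∀ p, |d p| ≤ D)
    (hc : ∀ C, (∀ p, |d p| ≤ C) → ∀ p, |d p| ≤ κ * C) : ∀ p, d p = 0 := by
  have hk : ∀ k : ℕ, ∀ p, |d p| ≤ κ ^ k * D := by
    intro k
    induction k with
    | zero => simpa using hD
    | succ k ih =>
      intro p
      refine (hc _ ih p).trans_eq ?_
      ring
  intro p
  have ht : Filter.Tendsto (fun k : ℕ => κ ^ k * D) Filter.atTop (nhds (0 * D)) :=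
    (tendsto_pow_atTop_nhds_zero_of_lt_one h0 h1).mul_const D
  rw [zero_mul] at ht
  have := ge_of_tendsto' ht (fun k => hk k p)
  exact abs_nonpos_iff.1 this

/-- contraction estimate -/
lemma aux_contr {T : ℝ → ℝ → ℝ} {W : ℝ → ℝ} {κ₀ B : ℝ}
    (hT_int : ∀ p, Integrable (fun q => T p q)) (hW : Measurable W) (hWB : ∀ q, |W q| ≤ B)
    (hκ₀ : ∀ p, (∫ q, |T p q| * W q) ≤ κ₀) {u : ℝ → ℝ} {C : ℝ} (hC : 0 ≤ C)
    (hu : ∀ q, |u q| ≤ W q * C) (p : ℝ) :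
    |∫ q, T p q * u q| ≤ κ₀ * C := by
  have hi : Integrable (fun q => |T p q| * W q) :=
    (hT_int p).abs.mul_bdd (c := B) hW.aestronglyMeasurable (Filter.Eventually.of_forall hWB)
  have h1 : ‖∫ q, T p q * u q‖ ≤ ∫ q, (|T p q| * W q) * C := by
    refine norm_integral_le_of_norm_le (hi.mul_const C) (Filter.Eventually.of_forall fun q => ?_)
    rw [Real.norm_eq_abs, abs_mul, mul_assoc]
    exact mul_le_mul_of_nonneg_left (hu q) (abs_nonneg _)
  rw [integral_mul_const] at h1
  exact h1.trans (mul_le_mul_of_nonneg_right (hκ₀ p) hC)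

/-- Neumann iterates of the dressing equation -/
noncomputable def neumannIter (T n : ℝ → ℝ → ℝ) : ℕ → ℝ → ℝ → ℝ
  | 0 => fun _ _ => 0
  | k + 1 => fun y p => 1 + ∫ q, T p q * (n y q * neumannIter T n k y q)

lemma aux_joint {T n g : ℝ → ℝ → ℝ} {W : ℝ → ℝ} {κ₀ B C : ℝ}
    (hT_meas : Measurable (Function.uncurry T))
    (hT_int : ∀ p, Integrable (fun q => T p q)) (hW : Measurable W) (hWB : ∀ q, |W q| ≤ B)
    (hκ₀ : ∀ p, (∫ q, |T p q| * W q) ≤ κ₀) (h0 : 0 ≤ κ₀) (h1 : κ₀ < 1)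
    (hn : Measurable (Function.uncurry n)) (hnW : ∀ y q, |n y q| ≤ W q)
    (hg : ∀ x, Measurable fun p => g x p) (hgC : ∀ x p, |g x p| ≤ C)
    (heq : ∀ x p, g x p = 1 + ∫ q, T p q * (n x q * g x q)) :
    Measurable (Function.uncurry g) := by
  have hC0 : 0 ≤ C := (abs_nonneg _).trans (hgC 0 0)
  have hm : ∀ k, Measurable (Function.uncurry (neumannIter T n k)) := by
    intro k
    induction k with
    | zero => exact measurable_const
    | succ k ih =>
      have : StronglyMeasurable (Function.uncurry fun (z : ℝ × ℝ) (q : ℝ) =>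
          T z.2 q * (n z.1 q * neumannIter T n k z.1 q)) := by
        refine Measurable.stronglyMeasurable ?_
        refine Measurable.mul ?_ (Measurable.mul ?_ ?_)
        · exact hT_meas.comp ((measurable_snd.comp measurable_fst).prodMk measurable_snd)
        · exact hn.comp ((measurable_fst.comp measurable_fst).prodMk measurable_snd)
        · exact ih.comp ((measurable_fst.comp measurable_fst).prodMk measurable_snd)
      exact measurable_const.add this.integral_prod_right.measurable
  have hsec : ∀ {F : ℝ → ℝ → ℝ}, Measurable (Function.uncurry F) → ∀ y, Measurable (F y) :=
    fun hF y => hF.comp (measurable_const.prodMk measurable_id)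
  have hint : ∀ (y p : ℝ) (u : ℝ → ℝ) (M : ℝ), Measurable u → (∀ q, |u q| ≤ M) →
      Integrable (fun q => T p q * (n y q * u q)) := by
    intro y p u M hu hM
    refine (hT_int p).mul_bdd (c := B * M) ((hsec hn y).mul hu).aestronglyMeasurable
      (Filter.Eventually.of_forall fun q => ?_)
    rw [Real.norm_eq_abs, abs_mul]
    exact mul_le_mul ((hnW y q).trans ((le_abs_self _).trans (hWB q))) (hM q) (abs_nonneg _)
      ((abs_nonneg _).trans (hWB 0))
  have hest : ∀ k, ∀ y p, |g y p - neumannIter T n k y p| ≤ κ₀ ^ k * C := by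
    intro k
    induction k with
    | zero => intro y p; simpa [neumannIter] using hgC y p
    | succ k ih =>
      intro y p
      have hkC : 0 ≤ κ₀ ^ k * C := mul_nonneg (pow_nonneg h0 k) hC0
      have hb : ∀ q, |neumannIter T n k y q| ≤ C + κ₀ ^ k * C := by
        intro q
        have e : neumannIter T n k y q = g y q - (g y q - neumannIter T n k y q) := by ring
        rw [e]
        exact (abs_sub _ _).trans (add_le_add (hgC y q) (ih y q))
      have e : g y p - neumannIter T n (k+1) y p
          = ∫ q, T p q * (n y q * (g y q - neumannIter T n k y q)) := by
        rw [heq y p, neumannIter, add_sub_add_left_eq_sub,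
          ← integral_sub (hint y p _ _ (hg y) (hgC y)) (hint y p _ _ (hsec (hm k) y) hb)]
        congr 1
        ext q
        ring
      rw [e, pow_succ', mul_assoc]
      refine aux_contr hT_int hW hWB hκ₀ hkC (fun q => ?_) p
      rw [abs_mul]
      exact mul_le_mul (hnW y q) (ih y q) (abs_nonneg _) ((abs_nonneg _).trans (hnW y q))
  refine measurable_of_tendsto_metrizable hm (tendsto_pi_nhds.2 fun z => ?_)
  have ht : Filter.Tendsto (fun k : ℕ => κ₀ ^ k * C) Filter.atTop (nhds (0 * C)) :=
    (tendsto_pow_atTop_nhds_zero_of_lt_one h0 h1).mul_const C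
  rw [zero_mul] at ht
  refine tendsto_iff_dist_tendsto_zero.2 (squeeze_zero (fun _ => dist_nonneg) (fun k => ?_) ht)
  rw [dist_comm, Real.dist_eq]
  exact hest k z.1 z.2


/-- Uniqueness of the initial coordinate change. Any `f` with `f(0,p)=0`,
`f(x,·) ∈ B(ℝ)`, which is the integral of a bounded function `g` solving the dressing
equation of `1` with respect to `ñ_f(x,p) = n₀(X₀(f(x,p),p),p)` (i.e.
`∂̌f/∂̌x = 1^dr[f]`), equals `X̂₀(x,p) = ∫₀ˣ 1^dr₀(y,p) dy`; in particular the
fixed-point solution at time zero satisfies `X̂(0,x,p) = X̂₀(x,p)` and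
`n(0,x,p) = n₀(x,p)`. -/
theorem stmt_16
    (T : ℝ → ℝ → ℝ) (n₀ : ℝ → ℝ → ℝ) (v : ℝ → ℝ)
    (onedr0 Xhat0 X0 N0 : ℝ → ℝ → ℝ) (Xhat : ℝ → ℝ → ℝ → ℝ) (κ₀ Cv : ℝ)
    (hT_meas : Measurable (Function.uncurry T))
    (hT_int : ∀ p, Integrable (fun q => T p q))
    (hT_op : ∃ M, ∀ p, (∫ q, |T p q|) ≤ M)
    (hn_meas : Measurable (Function.uncurry n₀))
    (hn_nonneg : ∀ x p, 0 ≤ n₀ x p)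
    (hn_bdd : ∃ C, ∀ x p, n₀ x p ≤ C)
    (hsup_meas : Measurable (fun q => ⨆ x, n₀ x q))
    (hκ₀ : ∀ p, (∫ q, |T p q| * ⨆ x, n₀ x q) ≤ κ₀)
    (hA : (((∀ p q, 0 ≤ T p q) ∨ (∀ p q, T p q ≤ 0)) ∧ κ₀ < 1) ∨ κ₀ < 1 / 2)
    (hv_meas : Measurable v)
    (hCv : ∀ x p, |v p| * n₀ x p ≤ Cv)
    (h1_meas : Measurable (Function.uncurry onedr0))
    (h1_bdd : ∃ C, ∀ y p, |onedr0 y p| ≤ C)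
    (h1_eq : ∀ y p, onedr0 y p = 1 + ∫ q, T p q * (n₀ y q * onedr0 y q))
    (hXhat0 : ∀ x p, Xhat0 x p = ∫ y in (0:ℝ)..x, onedr0 y p)
    (hX0_meas : Measurable (Function.uncurry X0))
    (hX0inv : ∀ p, Function.LeftInverse (fun xh => X0 xh p) (fun x => Xhat0 x p) ∧
      Function.RightInverse (fun xh => X0 xh p) (fun x => Xhat0 x p))
    (hN0 : ∀ xh p, N0 xh p = ∫ yh in (0:ℝ)..xh, n₀ (X0 yh p) p)
    (hXhat_eq : ∀ t x p, Xhat t x p = x + ∫ q, T p q * N0 (Xhat t x q - v q * t) q)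
    (hXhat_meas : ∀ t x, Measurable fun p => Xhat t x p)
    (hXhat_bdd : ∀ t x, ∃ C, ∀ p, |Xhat t x p| ≤ C) :
    -- uniqueness of the solution to the initial-value problem ∂̌f/∂̌x = 1^dr[f], f(0,·)=0:
    (∀ f g : ℝ → ℝ → ℝ,
      (∀ x, ∃ C, ∀ p, |f x p| ≤ C) →
      (∀ x, Measurable fun p => f x p) →
      (∃ C, ∀ x p, |g x p| ≤ C) →
      (∀ x, Measurable fun p => g x p) →
      (∀ p, Measurable fun y => g y p) →
      (∀ x p, g x p = 1 + ∫ q, T p q * (n₀ (X0 (f x q) q) q * g x q)) →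
      (∀ x p, f x p = ∫ y in (0:ℝ)..x, g y p) →
      ∀ x p, f x p = Xhat0 x p) ∧
    -- the fixed-point solution at time zero is X̂₀:
    (∀ x p, Xhat 0 x p = Xhat0 x p) ∧
    -- and the occupation function at time zero is n₀:
    (∀ x p, n₀ (X0 (Xhat 0 x p - v p * 0) p) p = n₀ x p) := by
  classical
  have hκ1 : κ₀ < 1 := by
    rcases hA with ⟨_, h⟩ | h
    · exact h
    · linarith
  obtain ⟨B, hB⟩ := hn_bdd
  have hbdd : ∀ q, BddAbove (Set.range fun x => n₀ x q) := fun q => ⟨B, by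
    rintro _ ⟨x, rfl⟩
    exact hB x q⟩
  set W : ℝ → ℝ := fun q => ⨆ x, n₀ x q with hWdef
  have hnW : ∀ x q, |n₀ x q| ≤ W q := fun x q => by
    rw [abs_of_nonneg (hn_nonneg x q)]
    exact le_ciSup (hbdd q) x
  have hW0 : ∀ q, 0 ≤ W q := fun q => (abs_nonneg _).trans (hnW 0 q)
  have hWB : ∀ q, |W q| ≤ B := fun q => by
    rw [abs_of_nonneg (hW0 q)]
    exact ciSup_le fun x => hB x q
  have hB0 : 0 ≤ B := (abs_nonneg _).trans (hWB 0)
  have hκ0 : 0 ≤ κ₀ :=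
    (integral_nonneg fun q => mul_nonneg (abs_nonneg _) (hW0 q)).trans (hκ₀ 0)
  -- the function `n₀ (X0 · q) q`
  have hm_meas : Measurable (Function.uncurry fun z q => n₀ (X0 z q) q) :=
    hn_meas.comp (hX0_meas.prodMk measurable_snd)
  have hm_sec : ∀ q, Measurable fun z => n₀ (X0 z q) q := fun q =>
    hm_meas.comp (measurable_id.prodMk measurable_const)
  have hN0lip : ∀ q a b, |N0 a q - N0 b q| ≤ W q * |a - b| := by
    intro q a b
    rw [hN0, hN0]
    exact aux_lip (hm_sec q) (fun y => hnW _ q) a b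
  have hN0zero : ∀ q, N0 0 q = 0 := fun q => by rw [hN0]; simp
  have hN0abs : ∀ q a, |N0 a q| ≤ W q * |a| := by
    intro q a
    simpa [hN0zero] using hN0lip q a 0
  have hIP : ∀ F : ℝ → ℝ → ℝ, Measurable (Function.uncurry F) → ∀ a,
      Measurable fun q => ∫ y in (0:ℝ)..a, F y q := by
    intro F hF a
    have h1 : StronglyMeasurable (Function.uncurry fun (q y : ℝ) => F y q) :=
      (hF.comp measurable_swap).stronglyMeasurable
    simp only [intervalIntegral]
    exact (h1.integral_prod_right (ν := volume.restrict (Set.Ioc 0 a))).measurable.sub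
      (h1.integral_prod_right (ν := volume.restrict (Set.Ioc a 0))).measurable
  have hN0_meas : Measurable (Function.uncurry N0) := by
    refine measurable_uncurry_of_continuous_of_measurable (u := N0) (fun q => ?_) (fun a => ?_)
    · have := (aux_lipschitz (hm_sec q) (fun y => hnW _ q)).continuous
      simpa only [← hN0] using this
    · have := hIP _ hm_meas a
      simpa only [← hN0] using this
  -- uniqueness for the fixed-point equation at fixed `x`
  have huniq : ∀ (x : ℝ) (φ ψ : ℝ → ℝ), Measurable φ → Measurable ψ →
      (∃ C, ∀ p, |φ p| ≤ C) → (∃ C, ∀ p, |ψ p| ≤ C) →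
      (∀ p, φ p = x + ∫ q, T p q * N0 (φ q) q) → (∀ p, ψ p = x + ∫ q, T p q * N0 (ψ q) q) →
      ∀ p, φ p = ψ p := by
    rintro x φ ψ hφ hψ ⟨C₁, hC₁⟩ ⟨C₂, hC₂⟩ eφ eψ p
    have hi : ∀ (χ : ℝ → ℝ) (C : ℝ), Measurable χ → (∀ p, |χ p| ≤ C) → ∀ p,
        Integrable (fun q => T p q * N0 (χ q) q) := by
      intro χ C hχ hC p
      refine (hT_int p).mul_bdd (c := B * C)
        (hN0_meas.comp (hχ.prodMk measurable_id)).aestronglyMeasurable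
        (Filter.Eventually.of_forall fun q => ?_)
      refine (hN0abs q _).trans ?_
      exact mul_le_mul ((le_abs_self _).trans (hWB q)) (hC q) (abs_nonneg _) hB0
    refine sub_eq_zero.1 (aux_zero (d := fun p => φ p - ψ p) (D := C₁ + C₂) hκ0 hκ1
      (fun p => (abs_sub _ _).trans (add_le_add (hC₁ p) (hC₂ p))) ?_ p)
    intro C hC p
    have e : φ p - ψ p = ∫ q, T p q * (N0 (φ q) q - N0 (ψ q) q) := by
      rw [eφ p, eψ p, add_sub_add_left_eq_sub, ← integral_sub (hi φ _ hφ hC₁ p) (hi ψ _ hψ hC₂ p)]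
      congr 1
      ext q
      ring
    simp only [e]
    refine aux_contr hT_int hsup_meas hWB hκ₀ ((abs_nonneg _).trans (hC 0)) (fun q => ?_) p
    exact (hN0lip q _ _).trans (mul_le_mul_of_nonneg_left (hC q) (hW0 q))
  -- any solution of the initial-value problem is the fixed-point solution
  have main : ∀ f g : ℝ → ℝ → ℝ,
      (∀ x, ∃ C, ∀ p, |f x p| ≤ C) →
      (∀ x, Measurable fun p => f x p) →
      (∃ C, ∀ x p, |g x p| ≤ C) →
      (∀ x, Measurable fun p => g x p) →
      (∀ p, Measurable fun y => g y p) →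
      (∀ x p, g x p = 1 + ∫ q, T p q * (n₀ (X0 (f x q) q) q * g x q)) →
      (∀ x p, f x p = ∫ y in (0:ℝ)..x, g y p) →
      ∀ x p, f x p = Xhat 0 x p := by
    rintro f g hfb hfm ⟨C, hgC⟩ hgm hgm' hgeq hfeq x
    have hC0 : 0 ≤ C := (abs_nonneg _).trans (hgC 0 0)
    have hf_meas : Measurable (Function.uncurry f) := by
      refine measurable_uncurry_of_continuous_of_measurable (u := f) (fun q => ?_) hfm
      have := (aux_lipschitz (hgm' q) (fun y => hgC y q)).continuous
      simpa only [← hfeq] using this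
    have hn_meas' : Measurable (Function.uncurry fun y q => n₀ (X0 (f y q) q) q) :=
      hm_meas.comp (hf_meas.prodMk measurable_snd)
    have hg_meas : Measurable (Function.uncurry g) :=
      aux_joint (n := fun y q => n₀ (X0 (f y q) q) q) hT_meas hT_int hsup_meas hWB hκ₀ hκ0 hκ1
        hn_meas' (fun y q => hnW _ q) hgm hgC hgeq
    refine huniq x (f x) (Xhat 0 x) (hfm x) (hXhat_meas 0 x) (hfb x) (hXhat_bdd 0 x) ?_ ?_
    · intro p
      have hcov : ∀ q, (∫ y in (0:ℝ)..x, n₀ (X0 (f y q) q) q * g y q) = N0 (f x q) q := by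
        intro q
        have := aux_cov (hgm' q) (fun y => hgC y q) (hm_sec q) (fun y => hnW _ q) x
        simp only [← hfeq] at this
        rw [this, hN0]
      have hTi : Integrable (Function.uncurry fun y q =>
          T p q * (n₀ (X0 (f y q) q) q * g y q))
          ((volume.restrict (Set.uIoc 0 x)).prod volume) := by
        have h1 : Integrable (fun z : ℝ × ℝ => (B * C) * |T p z.2|)
            ((volume.restrict (Set.uIoc 0 x)).prod volume) :=
          Integrable.mul_prod (f := fun _ : ℝ => B * C) (g := fun q => |T p q|)
            (by
              have : IsFiniteMeasure (volume.restrict (Set.uIoc 0 x)) := by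
                rw [Set.uIoc]; infer_instance
              exact integrable_const _) (hT_int p).abs
        refine h1.mono' ?_ (Filter.Eventually.of_forall fun z => ?_)
        · refine Measurable.aestronglyMeasurable (Measurable.mul ?_ (hn_meas'.mul hg_meas))
          exact hT_meas.comp (measurable_const.prodMk measurable_snd)
        · simp only [Function.uncurry, Real.norm_eq_abs, abs_mul]
          rw [mul_comm (B * C)]
          refine mul_le_mul_of_nonneg_left ?_ (abs_nonneg _)
          exact mul_le_mul ((hnW _ _).trans ((le_abs_self _).trans (hWB _))) (hgC _ _)
            (abs_nonneg _) hB0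
      have hgi : IntervalIntegrable (fun y => ∫ q, T p q * (n₀ (X0 (f y q) q) q * g y q))
          volume 0 x := by
        have h1 : (fun y => ∫ q, T p q * (n₀ (X0 (f y q) q) q * g y q)) = fun y => g y p - 1 := by
          ext y
          rw [hgeq y p]
          ring
        rw [h1]
        exact (aux_intervalIntegrable (hgm' p) (fun y => hgC y p) 0 x).sub intervalIntegrable_const
      calc f x p = ∫ y in (0:ℝ)..x, (1 + ∫ q, T p q * (n₀ (X0 (f y q) q) q * g y q)) := by
            rw [hfeq]
            exact intervalIntegral.integral_congr fun y _ => hgeq y p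
        _ = x + ∫ y in (0:ℝ)..x, ∫ q, T p q * (n₀ (X0 (f y q) q) q * g y q) := by
            rw [intervalIntegral.integral_add intervalIntegrable_const hgi]
            simp
        _ = x + ∫ q, T p q * N0 (f x q) q := by
            rw [intervalIntegral_integral_swap hTi]
            simp only [intervalIntegral.integral_const_mul, hcov]
    · intro p
      have := hXhat_eq 0 x p
      simpa only [mul_zero, sub_zero] using this
  have hX : ∀ x p, Xhat0 x p = Xhat 0 x p := by
    obtain ⟨C, hC⟩ := h1_bdd
    have hs : ∀ p, Measurable fun y => onedr0 y p := fun p =>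
      h1_meas.comp (measurable_id.prodMk measurable_const)
    refine main Xhat0 onedr0 (fun x => ⟨C * |x|, fun p => ?_⟩) (fun x => ?_) ⟨C, hC⟩
      (fun x => h1_meas.comp (measurable_const.prodMk measurable_id)) hs (fun x p => ?_) hXhat0
    · rw [hXhat0]
      simpa using aux_lip (hs p) (fun y => hC y p) x 0
    · have := hIP _ h1_meas x
      simpa only [← hXhat0] using this
    · have h2 : ∀ q, X0 (Xhat0 x q) q = x := fun q => (hX0inv q).1 x
      simp only [h2]
      exact h1_eq x p
  refine ⟨fun f g h1 h2 h3 h4 h5 h6 h7 x p => ?_, fun x p => (hX x p).symm, fun x p => ?_⟩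
  · rw [hX]
    exact main f g h1 h2 h3 h4 h5 h6 h7 x p
  · rw [mul_zero, sub_zero, ← hX]
    have h2 : X0 (Xhat0 x p) p = x := (hX0inv p).1 x
    rw [h2]
end

section
/- Equivalence of weak formulations of a conservation law: Let q, j ∈ B(ℝ²) be bounded measurable functions of (t,x). The following are equivalent: (i) [weak form] for every Schwartz function φ on ℝ², ∫∫ (∂_t φ · q + ∂_x φ · j) dt dx = 0; (ii) [partial integral form] for a.e. (x₁,x₂,t₁,t₂) ∈ ℝ⁴, ∫_{x₁}^{x₂}(q(t₂,x) − q(t₁,x))dx + ∫_{t₁}^{t₂}(j(t,x₂) − j(t,x₁))dt = 0; (iii) [partial potential form] there exists N : ℝ² → ℝ with N(0,0) = 0, absolutely continuous in x uniformly in t and in t uniformly in x, such that ∂N/∂x = q for a.e. t and a.e. x, and ∂N/∂t = −j for a.e. x and a.e. t. -/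
open MeasureTheory

section Aux

open Filter Topology Set
open scoped NNReal ContDiff

theorem aux_locInt {E : Type*} [NormedAddCommGroup E] [MeasurableSpace E] [BorelSpace E]
    [ProperSpace E] {μ : Measure E} [IsLocallyFiniteMeasure μ] {f : E → ℝ} (hf : Measurable f) {C : ℝ}
    (hC : ∀ x, |f x| ≤ C) : LocallyIntegrable f μ := by
  have h1 : LocallyIntegrable (fun _ : E => C) μ := locallyIntegrable_const C
  refine h1.mono hf.aestronglyMeasurable (Eventually.of_forall fun x => ?_)
  exact (hC x).trans (le_abs_self C)

theorem aux_II {f : ℝ → ℝ} (hf : Measurable f) {C : ℝ}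
    (hC : ∀ x, |f x| ≤ C) (a b : ℝ) : IntervalIntegrable f volume a b :=
  ((aux_locInt (μ := volume) hf hC).integrableOn_isCompact isCompact_uIcc).intervalIntegrable

theorem aux_bound {f : ℝ → ℝ} {C : ℝ} (hC : ∀ x, |f x| ≤ C) (a b : ℝ) :
    |∫ x in a..b, f x| ≤ C * |b - a| := by
  have := intervalIntegral.norm_integral_le_of_norm_le_const (a := a) (b := b) (f := f) (C := C)
    fun x _ => hC x
  exact this

theorem aux_rearr : MeasurePreserving
    (fun w : (ℝ × ℝ) × ℝ × ℝ => ((w.1.1, w.2.1), (w.1.2, w.2.2))) volume volume := by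
  have h1 := measurePreserving_prodAssoc (volume : Measure ℝ) (volume : Measure ℝ)
    (volume : Measure (ℝ × ℝ))
  have h2 := measurePreserving_prodAssoc (volume : Measure ℝ) (volume : Measure ℝ)
    (volume : Measure ℝ)
  have h3 := (Measure.measurePreserving_swap (μ := (volume : Measure ℝ)) (ν := (volume : Measure ℝ))).prod
    (MeasurePreserving.id (volume : Measure ℝ))
  have h4 := (h2.comp h3).comp (h2.symm)
  have h5 := (MeasurePreserving.id (volume : Measure ℝ)).prod h4
  exact (h1.symm.comp h5).comp h1

theorem aux_32 (q j : ℝ → ℝ → ℝ)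
    (hq : Measurable (Function.uncurry q)) (hj : Measurable (Function.uncurry j))
    {C D : ℝ} (hC : ∀ t x, |q t x| ≤ C) (hD : ∀ t x, |j t x| ≤ D)
    (N : ℝ → ℝ → ℝ)
    (h1 : ∀ᵐ t ∂(volume : Measure ℝ), ∀ x x', N t x - N t x' = ∫ y in x'..x, q t y)
    (h2 : ∀ᵐ x ∂(volume : Measure ℝ), ∀ t t', N t x - N t' x = ∫ s in t'..t, -(j s x)) :
    (∀ᵐ w ∂(volume : Measure ((ℝ × ℝ) × ℝ × ℝ)),
        (∫ x in w.1.1..w.1.2, (q w.2.2 x - q w.2.1 x))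
          + (∫ t in w.2.1..w.2.2, (j t w.1.2 - j t w.1.1)) = 0) := by
  have f1 : Measure.QuasiMeasurePreserving (Prod.fst : (ℝ × ℝ) × ℝ × ℝ → ℝ × ℝ) volume volume :=
    Measure.quasiMeasurePreserving_fst
  have f2 : Measure.QuasiMeasurePreserving (Prod.snd : (ℝ × ℝ) × ℝ × ℝ → ℝ × ℝ) volume volume :=
    Measure.quasiMeasurePreserving_snd
  have g1 : Measure.QuasiMeasurePreserving (Prod.fst : ℝ × ℝ → ℝ) volume volume :=
    Measure.quasiMeasurePreserving_fst
  have g2 : Measure.QuasiMeasurePreserving (Prod.snd : ℝ × ℝ → ℝ) volume volume :=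
    Measure.quasiMeasurePreserving_snd
  filter_upwards [(g1.comp f1).ae h2, (g2.comp f1).ae h2, (g1.comp f2).ae h1, (g2.comp f2).ae h1]
    with w a1 a2 a3 a4
  simp only [Function.comp] at a1 a2 a3 a4
  rw [intervalIntegral.integral_sub (aux_II (hq.of_uncurry_left) (hC _) _ _)
    (aux_II (hq.of_uncurry_left) (hC _) _ _), intervalIntegral.integral_sub
    (aux_II (hj.of_uncurry_right) (fun t => hD t _) _ _)
    (aux_II (hj.of_uncurry_right) (fun t => hD t _) _ _), ← a3, ← a4]
  have b1 := a1 w.2.2 w.2.1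
  have b2 := a2 w.2.2 w.2.1
  rw [intervalIntegral.integral_neg] at b1 b2
  linarith

theorem aux_23 (q j : ℝ → ℝ → ℝ)
    (hq : Measurable (Function.uncurry q)) (hj : Measurable (Function.uncurry j))
    {C D : ℝ} (hC : ∀ t x, |q t x| ≤ C) (hD : ∀ t x, |j t x| ≤ D)
    (H : ∀ᵐ w ∂(volume : Measure ((ℝ × ℝ) × ℝ × ℝ)),
        (∫ x in w.1.1..w.1.2, (q w.2.2 x - q w.2.1 x))
          + (∫ t in w.2.1..w.2.2, (j t w.1.2 - j t w.1.1)) = 0) :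
    (∃ N : ℝ → ℝ → ℝ, N 0 0 = 0 ∧
          (∃ C, (∀ t x x', |N t x - N t x'| ≤ C * |x - x'|) ∧
                (∀ x t t', |N t x - N t' x| ≤ C * |t - t'|)) ∧
          (∀ᵐ t ∂(volume : Measure ℝ), ∀ x x', N t x - N t x' = ∫ y in x'..x, q t y) ∧
          (∀ᵐ x ∂(volume : Measure ℝ), ∀ t t', N t x - N t' x = ∫ s in t'..t, -(j s x))) := by
  have hC0 : 0 ≤ C := (abs_nonneg _).trans (hC 0 0)
  have hD0 : 0 ≤ D := (abs_nonneg _).trans (hD 0 0)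
  have hqi : ∀ t a b, IntervalIntegrable (q t) volume a b := fun t =>
    aux_II (hq.of_uncurry_left) (hC t)
  have hji : ∀ x a b, IntervalIntegrable (fun s => j s x) volume a b := fun x =>
    aux_II (hj.of_uncurry_right) (fun s => hD s x)
  have H1 := Measure.ae_ae_of_ae_prod (aux_rearr.quasiMeasurePreserving.ae H)
  obtain ⟨⟨x0, t0⟩, H2⟩ := H1.exists
  simp only at H2
  set M : ℝ → ℝ → ℝ := fun t x => (∫ y in x0..x, q t0 y) - ∫ s in t0..t, j s x with hM
  set M' : ℝ → ℝ → ℝ := fun t x => (∫ y in x0..x, q t y) - ∫ s in t0..t, j s x0 with hM'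
  have H3 : ∀ᵐ z ∂((volume : Measure ℝ).prod (volume : Measure ℝ)), M z.2 z.1 = M' z.2 z.1 := by
    filter_upwards [H2] with z hz
    rw [intervalIntegral.integral_sub (hqi _ _ _) (hqi _ _ _),
      intervalIntegral.integral_sub (hji _ _ _) (hji _ _ _)] at hz
    simp only [hM, hM']
    linarith
  have HX : ∀ᵐ x ∂(volume : Measure ℝ), ∀ᵐ t ∂(volume : Measure ℝ), M t x = M' t x :=
    Measure.ae_ae_of_ae_prod H3
  have HT : ∀ᵐ t ∂(volume : Measure ℝ), ∀ᵐ x ∂(volume : Measure ℝ), M t x = M' t x :=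
    Measure.ae_ae_of_ae_prod (Measure.measurePreserving_swap.quasiMeasurePreserving.ae H3)
  have hMsub : ∀ x t t', M t x - M t' x = ∫ s in t'..t, -(j s x) := by
    intro x t t'
    rw [intervalIntegral.integral_neg,
      ← intervalIntegral.integral_interval_sub_left (hji x t0 t) (hji x t0 t')]
    simp only [hM]; ring
  have hM'sub : ∀ t x x', M' t x - M' t x' = ∫ y in x'..x, q t y := by
    intro t x x'
    rw [← intervalIntegral.integral_interval_sub_left (hqi t x0 x) (hqi t x0 x')]
    simp only [hM']; ring
  have hMlip : ∀ x t t', |M t x - M t' x| ≤ D * |t - t'| := by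
    intro x t t'
    rw [hMsub]
    exact aux_bound (fun s => by rw [abs_neg]; exact hD s x) _ _
  have hM'lip : ∀ t x x', |M' t x - M' t x'| ≤ C * |x - x'| := by
    intro t x x'
    rw [hM'sub]
    exact aux_bound (hC t) _ _
  have hM'c : ∀ t, Continuous (M' t) := fun t =>
    (LipschitzWith.of_dist_le_mul (K := ⟨C, hC0⟩) fun x x' => hM'lip t x x').continuous
  have hMc : ∀ x, Continuous (fun t => M t x) := fun x =>
    (LipschitzWith.of_dist_le_mul (K := ⟨D, hD0⟩) fun t t' => hMlip x t t').continuous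
  set T : Set ℝ := {t | ∀ᵐ x ∂(volume : Measure ℝ), M t x = M' t x} with hT
  have hTlip : ∀ t ∈ T, ∀ t' ∈ T, ∀ x, |M' t x - M' t' x| ≤ D * |t - t'| := by
    intro t ht t' ht' x
    have hd : Dense {x | |M' t x - M' t' x| ≤ D * |t - t'|} := by
      apply Measure.dense_of_ae (μ := (volume : Measure ℝ))
      filter_upwards [ht, ht'] with x h1 h2
      rw [← h1, ← h2]; exact hMlip x t t'
    have hcl : IsClosed {x | |M' t x - M' t' x| ≤ D * |t - t'|} :=
      isClosed_le (((hM'c t).sub (hM'c t')).abs) continuous_const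
    have := hd.closure_eq
    rw [hcl.closure_eq] at this
    exact this.ge (mem_univ x)
  have hL : LipschitzOnWith (⟨C + D, add_nonneg hC0 hD0⟩ : ℝ≥0) (Function.uncurry M') (T ×ˢ univ) := by
    apply LipschitzOnWith.of_dist_le_mul
    rintro ⟨t, x⟩ ⟨ht, -⟩ ⟨t', x'⟩ ⟨ht', -⟩
    simp only at ht ht'
    have e1 := hTlip t ht t' ht' x
    have e2 := hM'lip t' x x'
    have e3 : |t - t'| ≤ dist (t, x) (t', x') := by
      rw [Prod.dist_eq]; exact le_max_left _ _
    have e4 : |x - x'| ≤ dist (t, x) (t', x') := by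
      rw [Prod.dist_eq]; exact le_max_right _ _
    have e5 : |M' t x - M' t' x'| ≤ |M' t x - M' t' x| + |M' t' x - M' t' x'| := abs_sub_le _ _ _
    change |M' t x - M' t' x'| ≤ (C + D) * _
    nlinarith [mul_le_mul_of_nonneg_left e3 hD0, mul_le_mul_of_nonneg_left e4 hC0]
  obtain ⟨g, hg, hgM⟩ := hL.extend_real
  have hgT : ∀ t ∈ T, ∀ x, g (t, x) = M' t x := fun t ht x =>
    (hgM (show (t, x) ∈ T ×ˢ univ from ⟨ht, mem_univ _⟩)).symm
  refine ⟨fun t x => g (t, x) - g (0, 0), by simp, ⟨C + D, ?_, ?_⟩, ?_, ?_⟩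
  · intro t x x'
    have := hg.dist_le_mul (t, x) (t, x')
    rw [Prod.dist_eq, dist_self, max_eq_right dist_nonneg] at this
    rw [sub_sub_sub_cancel_right]
    exact this
  · intro x t t'
    have := hg.dist_le_mul (t, x) (t', x)
    rw [Prod.dist_eq, dist_self, max_eq_left dist_nonneg] at this
    rw [sub_sub_sub_cancel_right]
    exact this
  · filter_upwards [HT] with t ht x x'
    rw [sub_sub_sub_cancel_right, hgT t ht, hgT t ht, hM'sub]
  · filter_upwards [HX] with x hx t t'
    have : (fun t => g (t, x)) = fun t => M t x := by
      apply Measure.eq_of_ae_eq (μ := (volume : Measure ℝ)) _ (hg.continuous.comp (by fun_prop)) (hMc x)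
      filter_upwards [hx, HT] with t h1 h2
      exact (hgT t h2 x).trans h1.symm
    rw [sub_sub_sub_cancel_right, congrFun this t, congrFun this t', hMsub]


open ContinuousLinearMap in
theorem aux_conv_bound {E : Type*} [NormedAddCommGroup E] [NormedSpace ℝ E] [FiniteDimensional ℝ E]
    [MeasurableSpace E] [BorelSpace E] {μ : Measure E} [μ.IsAddHaarMeasure]
    (φ : ContDiffBump (0 : E)) {f : E → ℝ} {C : ℝ} (hC : ∀ x, |f x| ≤ C) (z : E) :
    |convolution (φ.normed μ) f (lsmul ℝ ℝ) μ z| ≤ C := by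
  have h : ‖∫ t, (lsmul ℝ ℝ) (φ.normed μ t) (f (z - t)) ∂μ‖ ≤ ∫ t, φ.normed μ t * C ∂μ := by
    refine norm_integral_le_of_norm_le (φ.integrable_normed.mul_const C)
      (Eventually.of_forall fun t => ?_)
    simp only [lsmul_apply, smul_eq_mul, norm_mul, Real.norm_eq_abs, abs_of_nonneg (φ.nonneg_normed t)]
    exact mul_le_mul_of_nonneg_left (hC _) (φ.nonneg_normed t)
  rw [integral_mul_const, φ.integral_normed, one_mul] at h
  exact h

open ContinuousLinearMap in
theorem aux_conv_deriv
    (φ : ContDiffBump (0 : ℝ × ℝ)) {f : ℝ × ℝ → ℝ} (hf : LocallyIntegrable f volume) (z v : ℝ × ℝ) :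
    (convolution (fderiv ℝ (φ.normed volume)) f ((lsmul ℝ ℝ).precompL (ℝ × ℝ)) volume z) v
      = ∫ y, fderiv ℝ (φ.normed volume) (z - y) v * f y := by
  have hc : ConvolutionExistsAt (fderiv ℝ (φ.normed volume)) f z ((lsmul ℝ ℝ).precompL (ℝ × ℝ)) volume :=
    (φ.hasCompactSupport_normed.fderiv ℝ).convolutionExists_left _
      ((φ.contDiff_normed (n := 1)).continuous_fderiv (by simp)) hf z
  rw [convolution_eq_swap, ContinuousLinearMap.integral_apply]
  · rfl
  · have := hc.integrable_swap
    exact this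

theorem aux_12 (q j : ℝ → ℝ → ℝ)
    (hq : Measurable (Function.uncurry q)) (hj : Measurable (Function.uncurry j))
    {C D : ℝ} (hC : ∀ t x, |q t x| ≤ C) (hD : ∀ t x, |j t x| ≤ D)
    (H : ∀ φ : SchwartzMap (ℝ × ℝ) ℝ,
        (∫ z : ℝ × ℝ, (fderiv ℝ (⇑φ) z ((1 : ℝ), (0 : ℝ)) * q z.1 z.2
          + fderiv ℝ (⇑φ) z ((0 : ℝ), (1 : ℝ)) * j z.1 z.2)) = 0) :
    (∀ᵐ w ∂(volume : Measure ((ℝ × ℝ) × ℝ × ℝ)),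
        (∫ x in w.1.1..w.1.2, (q w.2.2 x - q w.2.1 x))
          + (∫ t in w.2.1..w.2.2, (j t w.1.2 - j t w.1.1)) = 0) := by
  set Q : ℝ × ℝ → ℝ := Function.uncurry q with hQ
  set J : ℝ × ℝ → ℝ := Function.uncurry j with hJ
  have hQb : ∀ z, |Q z| ≤ C := fun z => hC _ _
  have hJb : ∀ z, |J z| ≤ D := fun z => hD _ _
  have hQl : LocallyIntegrable Q volume := aux_locInt hq hQb
  have hJl : LocallyIntegrable J volume := aux_locInt hj hJb
  let φ : ℕ → ContDiffBump (0 : ℝ × ℝ) := fun n =>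
    ⟨1 / ((n : ℝ) + 1), 2 * (1 / ((n : ℝ) + 1)), by positivity, by
      have : 0 < 1 / ((n : ℝ) + 1) := by positivity
      linarith⟩
  have hφ0 : Tendsto (fun n => (φ n).rOut) atTop (𝓝 0) := by
    have := (tendsto_one_div_add_atTop_nhds_zero_nat (𝕜 := ℝ)).const_mul 2
    rw [mul_zero] at this
    exact this
  have hφK : ∀ᶠ n in atTop, (φ n).rOut ≤ 2 * (φ n).rIn := Eventually.of_forall fun n => le_rfl
  let cq : ℕ → ℝ × ℝ → ℝ := fun n =>
    convolution ((φ n).normed volume) Q (ContinuousLinearMap.lsmul ℝ ℝ) volume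
  let cj : ℕ → ℝ × ℝ → ℝ := fun n =>
    convolution ((φ n).normed volume) J (ContinuousLinearMap.lsmul ℝ ℝ) volume
  have hcq : ∀ᵐ z, Tendsto (fun n => cq n z) atTop (𝓝 (Q z)) :=
    ContDiffBump.ae_convolution_tendsto_right_of_locallyIntegrable hφ0 hφK hQl
  have hcj : ∀ᵐ z, Tendsto (fun n => cj n z) atTop (𝓝 (J z)) :=
    ContDiffBump.ae_convolution_tendsto_right_of_locallyIntegrable hφ0 hφK hJl
  have dq : ∀ n z, HasFDerivAt (cq n) _ z := fun n z =>
    (φ n).hasCompactSupport_normed.hasFDerivAt_convolution_left (ContinuousLinearMap.lsmul ℝ ℝ)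
      ((φ n).contDiff_normed) hQl z
  have dj : ∀ n z, HasFDerivAt (cj n) _ z := fun n z =>
    (φ n).hasCompactSupport_normed.hasFDerivAt_convolution_left (ContinuousLinearMap.lsmul ℝ ℝ)
      ((φ n).contDiff_normed) hJl z
  have cqc : ∀ n, Continuous (cq n) := fun n =>
    continuous_iff_continuousAt.2 fun z => (dq n z).continuousAt
  have cjc : ∀ n, Continuous (cj n) := fun n =>
    continuous_iff_continuousAt.2 fun z => (dj n z).continuousAt
  have cqb : ∀ n z, |cq n z| ≤ C := fun n z => aux_conv_bound (φ n) hQb z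
  have cjb : ∀ n z, |cj n z| ≤ D := fun n z => aux_conv_bound (φ n) hJb z
  -- zero divergence of the mollified field
  have hdiv : ∀ n z,
      (convolution (fderiv ℝ ((φ n).normed volume)) Q
        ((ContinuousLinearMap.lsmul ℝ ℝ).precompL (ℝ × ℝ)) volume z) (1, 0) +
      (convolution (fderiv ℝ ((φ n).normed volume)) J
        ((ContinuousLinearMap.lsmul ℝ ℝ).precompL (ℝ × ℝ)) volume z) (0, 1) = 0 := by
    intro n z
    rw [aux_conv_deriv _ hQl, aux_conv_deriv _ hJl]
    have hsm : ContDiff ℝ ∞ (fun y => (φ n).normed volume (z - y)) :=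
      (φ n).contDiff_normed.comp (contDiff_const.sub contDiff_id)
    have hcs : HasCompactSupport (fun y => (φ n).normed volume (z - y)) :=
      (φ n).hasCompactSupport_normed.comp_homeomorph (Homeomorph.subLeft z)
    have key := H (hcs.toSchwartzMap hsm)
    have hfd : ∀ y v, fderiv ℝ (⇑(hcs.toSchwartzMap hsm)) y v
        = - fderiv ℝ ((φ n).normed volume) (z - y) v := by
      intro y v
      have h1 : HasFDerivAt ((φ n).normed volume) (fderiv ℝ ((φ n).normed volume) (z - y)) (z - y) :=
        (((φ n).contDiff_normed (n := 1)).differentiable (by simp) _).hasFDerivAt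
      have h2 := h1.comp y ((hasFDerivAt_id y).const_sub z)
      have h3 : fderiv ℝ (⇑(hcs.toSchwartzMap hsm)) y = _ := h2.fderiv
      rw [h3]; simp
    simp only [hfd] at key
    have hcont : Continuous (fderiv ℝ ((φ n).normed volume)) :=
      ((φ n).contDiff_normed (n := 1)).continuous_fderiv (by simp)
    have hint : ∀ (v : ℝ × ℝ) (F : ℝ × ℝ → ℝ), Measurable F → ∀ B, (∀ z, |F z| ≤ B) →
        Integrable (fun y => fderiv ℝ ((φ n).normed volume) (z - y) v * F y) := by
      intro v F hF B hB
      have h1 : Integrable (fun y => fderiv ℝ ((φ n).normed volume) (z - y) v) := by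
        refine Continuous.integrable_of_hasCompactSupport (by fun_prop) ?_
        exact (((φ n).hasCompactSupport_normed.fderiv_apply ℝ v)).comp_homeomorph
          (Homeomorph.subLeft z)
      exact h1.mul_bdd hF.aestronglyMeasurable (Eventually.of_forall hB)
    rw [← integral_add (hint _ _ hq _ hQb) (hint _ _ hj _ hJb), ← neg_eq_zero, ← integral_neg]
    refine Eq.trans ?_ key
    congr 1
    ext y
    simp only [hQ, hJ, Function.uncurry]
    ring
  have hrect : ∀ n t1 t2 x1 x2,
      ((∫ x in x1..x2, cq n (t2, x)) - ∫ x in x1..x2, cq n (t1, x)) +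
      ((∫ t in t1..t2, cj n (t, x2)) - ∫ t in t1..t2, cj n (t, x1)) = 0 := by
    intro n t1 t2 x1 x2
    have := integral2_divergence_prod_of_hasFDerivAt (cq n) (cj n) _ _ t1 x1 t2 x2
      (cqc n).continuousOn (cjc n).continuousOn (fun z _ => dq n z) (fun z _ => dj n z)
      (by simp only [hdiv]; exact integrableOn_zero)
    simp only [hdiv, intervalIntegral.integral_zero] at this
    linarith
  have HT : ∀ᵐ t ∂(volume : Measure ℝ), ∀ᵐ x ∂(volume : Measure ℝ),
      Tendsto (fun n => cq n (t, x)) atTop (𝓝 (q t x)) := Measure.ae_ae_of_ae_prod hcq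
  have HX : ∀ᵐ x ∂(volume : Measure ℝ), ∀ᵐ t ∂(volume : Measure ℝ),
      Tendsto (fun n => cj n (t, x)) atTop (𝓝 (j t x)) :=
    Measure.ae_ae_of_ae_prod (Measure.measurePreserving_swap.quasiMeasurePreserving.ae hcj)
  have LT : ∀ᵐ t ∂(volume : Measure ℝ), ∀ a b,
      Tendsto (fun n => ∫ x in a..b, cq n (t, x)) atTop (𝓝 (∫ x in a..b, q t x)) := by
    filter_upwards [HT] with t ht a b
    refine intervalIntegral.tendsto_integral_filter_of_dominated_convergence (fun _ => C)
      (Eventually.of_forall fun n => ?_) (Eventually.of_forall fun n => ?_) (by simp) ?_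
    · exact ((cqc n).comp (by fun_prop : Continuous fun x : ℝ => (t, x))).aestronglyMeasurable
    · exact Eventually.of_forall fun x _ => cqb n _
    · filter_upwards [ht] with x hx _ using hx
  have LX : ∀ᵐ x ∂(volume : Measure ℝ), ∀ a b,
      Tendsto (fun n => ∫ t in a..b, cj n (t, x)) atTop (𝓝 (∫ t in a..b, j t x)) := by
    filter_upwards [HX] with x hx a b
    refine intervalIntegral.tendsto_integral_filter_of_dominated_convergence (fun _ => D)
      (Eventually.of_forall fun n => ?_) (Eventually.of_forall fun n => ?_) (by simp) ?_
    · exact ((cjc n).comp (by fun_prop : Continuous fun t : ℝ => (t, x))).aestronglyMeasurable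
    · exact Eventually.of_forall fun x _ => cjb n _
    · filter_upwards [hx] with t ht _ using ht
  have f1 : Measure.QuasiMeasurePreserving (Prod.fst : (ℝ × ℝ) × ℝ × ℝ → ℝ × ℝ) volume volume :=
    Measure.quasiMeasurePreserving_fst
  have f2 : Measure.QuasiMeasurePreserving (Prod.snd : (ℝ × ℝ) × ℝ × ℝ → ℝ × ℝ) volume volume :=
    Measure.quasiMeasurePreserving_snd
  have g1 : Measure.QuasiMeasurePreserving (Prod.fst : ℝ × ℝ → ℝ) volume volume :=
    Measure.quasiMeasurePreserving_fst
  have g2 : Measure.QuasiMeasurePreserving (Prod.snd : ℝ × ℝ → ℝ) volume volume :=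
    Measure.quasiMeasurePreserving_snd
  filter_upwards [(g1.comp f1).ae LX, (g2.comp f1).ae LX, (g1.comp f2).ae LT, (g2.comp f2).ae LT]
    with w a1 a2 a3 a4
  simp only [Function.comp] at a1 a2 a3 a4
  rw [intervalIntegral.integral_sub (aux_II (hq.of_uncurry_left) (hC _) _ _)
    (aux_II (hq.of_uncurry_left) (hC _) _ _), intervalIntegral.integral_sub
    (aux_II (hj.of_uncurry_right) (fun t => hD t _) _ _)
    (aux_II (hj.of_uncurry_right) (fun t => hD t _) _ _)]
  refine tendsto_nhds_unique (((a4 w.1.1 w.1.2).sub (a3 w.1.1 w.1.2)).add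
    ((a2 w.2.1 w.2.2).sub (a1 w.2.1 w.2.2))) ?_
  simp only [hrect]
  exact tendsto_const_nhds


/-- The weak form for smooth compactly supported test functions. -/
theorem aux_31c (q j : ℝ → ℝ → ℝ)
    (hq : Measurable (Function.uncurry q)) (hj : Measurable (Function.uncurry j))
    {C D : ℝ} (hC : ∀ t x, |q t x| ≤ C) (hD : ∀ t x, |j t x| ≤ D)
    (g : ℝ × ℝ → ℝ) {K : ℝ≥0} (hg : LipschitzWith K g)
    (h1 : ∀ᵐ z ∂(volume : Measure (ℝ × ℝ)), lineDeriv ℝ g z (0, 1) = q z.1 z.2)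
    (h2 : ∀ᵐ z ∂(volume : Measure (ℝ × ℝ)), lineDeriv ℝ g z (1, 0) = - j z.1 z.2)
    (ψ : ℝ × ℝ → ℝ) (hψ : ContDiff ℝ ∞ ψ) (hcs : HasCompactSupport ψ) :
    (∫ z : ℝ × ℝ, (fderiv ℝ ψ z ((1 : ℝ), (0 : ℝ)) * q z.1 z.2
          + fderiv ℝ ψ z ((0 : ℝ), (1 : ℝ)) * j z.1 z.2)) = 0 := by
  have hd : ContDiff ℝ ∞ (fderiv ℝ ψ) := hψ.fderiv_right (by simp)
  have hdv : ∀ v, ContDiff ℝ ∞ (fun z => fderiv ℝ ψ z v) := fun v => hd.clm_apply contDiff_const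
  have hcv : ∀ v, HasCompactSupport (fun z => fderiv ℝ ψ z v) := fun v => hcs.fderiv_apply ℝ v
  have hint : ∀ (v : ℝ × ℝ) (F : ℝ × ℝ → ℝ), Measurable F → ∀ B, (∀ z, |F z| ≤ B) →
      Integrable (fun y => fderiv ℝ ψ y v * F y) := fun v F hF B hB =>
    ((hdv v).continuous.integrable_of_hasCompactSupport (hcv v)).mul_bdd hF.aestronglyMeasurable
      (Eventually.of_forall hB)
  have hkey : ∀ v w, ∫ z, lineDeriv ℝ g z w * fderiv ℝ ψ z v
      = - ∫ z, (fderiv ℝ (fderiv ℝ ψ) z w v) * g z := by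
    intro v w
    obtain ⟨L, hL⟩ := ContDiff.lipschitzWith_of_hasCompactSupport (hcv v) (hdv v) (by simp)
    rw [hg.integral_lineDeriv_mul_eq hL (hcv v), ← integral_neg]
    congr 1
    ext z
    rw [((hdv v).differentiable (by simp) z).lineDeriv_eq_fderiv,
      fderiv_clm_apply (hd.differentiable (by simp) z) (differentiableAt_const v)]
    simp
  have hsymm : ∀ z v w, fderiv ℝ (fderiv ℝ ψ) z v w = fderiv ℝ (fderiv ℝ ψ) z w v := by
    intro z v w
    exact ((contDiff_infty.1 hψ 2).contDiffAt.isSymmSndFDerivAt (by simp)) v w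
  refine (integral_add (hint (1, 0) _ hq C (fun z => hC _ _))
    (hint (0, 1) _ hj D (fun z => hD _ _))).trans ?_
  have e1 : ∫ z : ℝ × ℝ, fderiv ℝ ψ z ((1 : ℝ), (0 : ℝ)) * q z.1 z.2
      = ∫ z, lineDeriv ℝ g z (0, 1) * fderiv ℝ ψ z (1, 0) := by
    apply integral_congr_ae
    filter_upwards [h1] with z hz
    rw [hz, mul_comm]
  have e2 : ∫ z : ℝ × ℝ, fderiv ℝ ψ z ((0 : ℝ), (1 : ℝ)) * j z.1 z.2
      = - ∫ z, lineDeriv ℝ g z (1, 0) * fderiv ℝ ψ z (0, 1) := by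
    rw [← integral_neg]
    apply integral_congr_ae
    filter_upwards [h2] with z hz
    rw [hz]; ring
  have e1' := e1.trans (hkey _ _)
  have e2' := e2.trans (congrArg Neg.neg (hkey _ _))
  refine (congrArg₂ (· + ·) e1' e2').trans ?_
  simp only [hsymm _ ((1 : ℝ), (0 : ℝ)) ((0 : ℝ), (1 : ℝ))]
  ring

theorem aux_31 (q j : ℝ → ℝ → ℝ)
    (hq : Measurable (Function.uncurry q)) (hj : Measurable (Function.uncurry j))
    {C D : ℝ} (hC : ∀ t x, |q t x| ≤ C) (hD : ∀ t x, |j t x| ≤ D)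
    (N : ℝ → ℝ → ℝ) {B : ℝ}
    (hB1 : ∀ t x x', |N t x - N t x'| ≤ B * |x - x'|)
    (hB2 : ∀ x t t', |N t x - N t' x| ≤ B * |t - t'|)
    (h1 : ∀ᵐ t ∂(volume : Measure ℝ), ∀ x x', N t x - N t x' = ∫ y in x'..x, q t y)
    (h2 : ∀ᵐ x ∂(volume : Measure ℝ), ∀ t t', N t x - N t' x = ∫ s in t'..t, -(j s x))
    (φ : SchwartzMap (ℝ × ℝ) ℝ) :
        (∫ z : ℝ × ℝ, (fderiv ℝ (⇑φ) z ((1 : ℝ), (0 : ℝ)) * q z.1 z.2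
          + fderiv ℝ (⇑φ) z ((0 : ℝ), (1 : ℝ)) * j z.1 z.2)) = 0 := by
  have hB0 : 0 ≤ B := by
    have := (abs_nonneg _).trans (hB1 0 1 0)
    simpa using this
  have hC0 : 0 ≤ C := (abs_nonneg _).trans (hC 0 0)
  have hD0 : 0 ≤ D := (abs_nonneg _).trans (hD 0 0)
  let g : ℝ × ℝ → ℝ := fun z => N z.1 z.2
  have hg : LipschitzWith (⟨B + B, add_nonneg hB0 hB0⟩ : ℝ≥0) g := by
    apply LipschitzWith.of_dist_le_mul
    rintro ⟨t, x⟩ ⟨t', x'⟩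
    have e1 := hB2 x t t'
    have e2 := hB1 t' x x'
    have e3 : |t - t'| ≤ dist (t, x) (t', x') := by
      rw [Prod.dist_eq]; exact le_max_left _ _
    have e4 : |x - x'| ≤ dist (t, x) (t', x') := by
      rw [Prod.dist_eq]; exact le_max_right _ _
    have e5 : |N t x - N t' x'| ≤ |N t x - N t' x| + |N t' x - N t' x'| := abs_sub_le _ _ _
    change |N t x - N t' x'| ≤ (B + B) * _
    nlinarith [mul_le_mul_of_nonneg_left e3 hB0, mul_le_mul_of_nonneg_left e4 hB0]
  have k1 : ∀ᵐ z ∂(volume : Measure (ℝ × ℝ)), lineDeriv ℝ g z (0, 1) = q z.1 z.2 := by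
    refine (Measure.ae_prod_iff_ae_ae
      (measurableSet_eq_fun (measurable_lineDeriv hg.continuous) hq)).2 ?_
    filter_upwards [h1] with t ht
    filter_upwards [LocallyIntegrable.ae_hasDerivAt_integral (aux_locInt (μ := (volume : Measure ℝ)) (hq.of_uncurry_left (x := t))
      (hC t))] with x hx
    have hx0 : HasDerivAt (N t) (q t x) x := by
      have : N t = fun x => (∫ y in (0:ℝ)..x, q t y) + N t 0 := by
        ext x; rw [← ht]; ring
      rw [this]; exact (hx 0).add_const _
    have hx1 : HasDerivAt (fun s : ℝ => N t (x + s)) (q t x) 0 := by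
      have := HasDerivAt.comp_const_add x 0 (f := N t) (f' := q t x) (by simpa using hx0)
      exact this
    change deriv (fun s : ℝ => g ((t, x) + s • ((0 : ℝ), (1 : ℝ)))) 0 = q t x
    simpa [g] using hx1.deriv
  have k2 : ∀ᵐ z ∂(volume : Measure (ℝ × ℝ)), lineDeriv ℝ g z (1, 0) = - j z.1 z.2 := by
    have hm : MeasurableSet {z : ℝ × ℝ | lineDeriv ℝ g z (1, 0) = - j z.1 z.2} :=
      measurableSet_eq_fun (measurable_lineDeriv hg.continuous) hj.neg
    refine (Measure.ae_prod_iff_ae_ae hm).2 ?_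
    refine (Measure.ae_ae_comm (p := fun t x => lineDeriv ℝ g (t, x) (1, 0) = - j t x) hm).2 ?_
    filter_upwards [h2] with x hx
    filter_upwards [LocallyIntegrable.ae_hasDerivAt_integral (aux_locInt (μ := (volume : Measure ℝ)) (hj.of_uncurry_right (y := x)).neg
      (C := D) (fun t => by rw [Pi.neg_apply, abs_neg]; exact hD t x))] with t ht
    have hx0 : HasDerivAt (fun t => N t x) (- j t x) t := by
      have : (fun t => N t x) = fun t => (∫ s in (0:ℝ)..t, - j s x) + N 0 x := by
        ext t; rw [← hx]; ring
      rw [this]; exact (ht 0).add_const _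
    have hx1 : HasDerivAt (fun s : ℝ => N (t + s) x) (- j t x) 0 := by
      have := HasDerivAt.comp_const_add t 0 (f := fun t => N t x) (f' := - j t x) (by simpa using hx0)
      exact this
    change deriv (fun s : ℝ => g ((t, x) + s • ((1 : ℝ), (0 : ℝ)))) 0 = - j t x
    simpa [g] using hx1.deriv
  -- cutoff
  let χ : ContDiffBump (0 : ℝ × ℝ) := ⟨1, 2, one_pos, one_lt_two⟩
  have hχ : ContDiff ℝ ∞ χ := χ.contDiff
  have hχd : Continuous (fderiv ℝ χ) := hχ.continuous_fderiv (by simp)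
  obtain ⟨M, hM⟩ := (χ.hasCompactSupport.fderiv ℝ).exists_bound_of_continuous hχd
  have hM0 : 0 ≤ M := (norm_nonneg _).trans (hM 0)
  let c : ℕ → ℝ := fun n => 1 / ((n : ℝ) + 1)
  have hc0 : ∀ n, 0 < c n := fun n => by positivity
  have hc1 : ∀ n, c n ≤ 1 := fun n => by
    have h : (0:ℝ) ≤ n := n.cast_nonneg
    exact div_le_one_of_le₀ (by linarith) (by linarith)
  have hct : Tendsto c atTop (𝓝 0) := tendsto_one_div_add_atTop_nhds_zero_nat
  let ψ : ℕ → ℝ × ℝ → ℝ := fun n z => χ (c n • z) * φ z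
  have hψs : ∀ n, ContDiff ℝ ∞ (ψ n) := fun n =>
    (hχ.comp (contDiff_const_smul (c n))).mul (φ.smooth ⊤)
  have hψc : ∀ n, HasCompactSupport (ψ n) := fun n =>
    (χ.hasCompactSupport.comp_homeomorph (Homeomorph.smulOfNeZero (c n) (hc0 n).ne')).mul_right
  have hψd : ∀ n z v, fderiv ℝ (ψ n) z v
      = χ (c n • z) * fderiv ℝ φ z v + c n * fderiv ℝ χ (c n • z) v * φ z := by
    intro n z v
    have a1 : HasFDerivAt χ (fderiv ℝ χ (c n • z)) (c n • z) :=
      (hχ.differentiable (by simp) _).hasFDerivAt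
    have a2 := a1.comp z ((hasFDerivAt_id z).const_smul (c n))
    have a3 := (a2.mul (φ.hasFDerivAt z)).fderiv
    have a4 : fderiv ℝ (ψ n) z = _ := a3
    rw [a4]
    simp
    ring
  have hz : ∀ n, (∫ z : ℝ × ℝ, (fderiv ℝ (ψ n) z ((1 : ℝ), (0 : ℝ)) * q z.1 z.2
          + fderiv ℝ (ψ n) z ((0 : ℝ), (1 : ℝ)) * j z.1 z.2)) = 0 := fun n =>
    aux_31c q j hq hj hC hD g hg k1 k2 (ψ n) (hψs n) (hψc n)
  have hlim : ∀ z v, Tendsto (fun n => fderiv ℝ (ψ n) z v) atTop (𝓝 (fderiv ℝ φ z v)) := by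
    intro z v
    simp only [hψd]
    have b0 : Tendsto (fun n => c n • z) atTop (𝓝 0) := by
      simpa using hct.smul_const z
    have b1 : Tendsto (fun n => χ (c n • z)) atTop (𝓝 1) := by
      have := (hχ.continuous.tendsto 0).comp b0
      rwa [χ.one_of_mem_closedBall (by simp [χ])] at this
    have b2 : Tendsto (fun n => fderiv ℝ χ (c n • z) v) atTop (𝓝 (fderiv ℝ χ 0 v)) :=
      ((hχd.clm_apply continuous_const).tendsto 0).comp b0
    simpa using (b1.mul_const (fderiv ℝ φ z v)).add ((hct.mul b2).mul_const (φ z))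
  have hbd : ∀ n z v, |fderiv ℝ (ψ n) z v| ≤ |fderiv ℝ φ z v| + M * ‖v‖ * |φ z| := by
    intro n z v
    rw [hψd]
    refine (abs_add_le _ _).trans (add_le_add ?_ ?_)
    · rw [abs_mul, abs_of_nonneg χ.nonneg]
      exact mul_le_of_le_one_left (abs_nonneg _) χ.le_one
    · rw [abs_mul, abs_mul, abs_of_pos (hc0 n)]
      refine mul_le_mul_of_nonneg_right ?_ (abs_nonneg _)
      have d1 : |fderiv ℝ χ (c n • z) v| ≤ M * ‖v‖ :=
        (ContinuousLinearMap.le_opNorm _ v).trans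
          (mul_le_mul_of_nonneg_right (hM _) (norm_nonneg _))
      exact (mul_le_of_le_one_left (abs_nonneg _) (hc1 n)).trans d1
  have hφd : ∀ v, Integrable (fun z => fderiv ℝ φ z v) := fun v => by
    have := (SchwartzMap.evalCLM ℝ (ℝ × ℝ) ℝ v (SchwartzMap.fderivCLM ℝ (ℝ × ℝ) ℝ φ)).integrable
      (μ := volume)
    exact this
  have hI : ∀ v, Integrable (fun z => |fderiv ℝ φ z v| + M * ‖v‖ * |φ z|) := fun v =>
    (hφd v).abs.add (φ.integrable.abs.const_mul _)
  refine tendsto_nhds_unique (f := fun n => ∫ z : ℝ × ℝ, (fderiv ℝ (ψ n) z ((1 : ℝ), (0 : ℝ)) * q z.1 z.2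
          + fderiv ℝ (ψ n) z ((0 : ℝ), (1 : ℝ)) * j z.1 z.2)) (l := atTop) ?_
    (by simp only [hz]; exact tendsto_const_nhds)
  refine tendsto_integral_of_dominated_convergence
    (fun z => (|fderiv ℝ φ z (1, 0)| + M * ‖((1 : ℝ), (0 : ℝ))‖ * |φ z|) * C +
      (|fderiv ℝ φ z (0, 1)| + M * ‖((0 : ℝ), (1 : ℝ))‖ * |φ z|) * D) ?_
    (((hI _).mul_const C).add ((hI _).mul_const D)) ?_ ?_
  · intro n
    have hcd : Continuous (fderiv ℝ (ψ n)) := (hψs n).continuous_fderiv (by simp)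
    have m1 : ∀ v, Measurable (fun z => fderiv ℝ (ψ n) z v) := fun v =>
      (hcd.clm_apply continuous_const).measurable
    exact (((m1 _).mul hq).add ((m1 _).mul hj)).aestronglyMeasurable
  · intro n
    refine Eventually.of_forall fun z => (norm_add_le _ _).trans (add_le_add ?_ ?_)
    · rw [norm_mul]
      exact mul_le_mul (hbd n z _) (hC _ _) (norm_nonneg _) ((abs_nonneg _).trans (hbd n z _))
    · rw [norm_mul]
      exact mul_le_mul (hbd n z _) (hD _ _) (norm_nonneg _) ((abs_nonneg _).trans (hbd n z _))
  · exact Eventually.of_forall fun z =>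
      ((hlim z _).mul_const _).add ((hlim z _).mul_const _)

end Aux

/-- Equivalence of weak formulations of the conservation law
`∂_t q + ∂_x j = 0` for bounded measurable density `q` and current `j`:
(i) the weak (Schwartz-test-function) form, (ii) the partial integral form (vanishing
of rectangular contour integrals for a.e. rectangle), and (iii) the partial potential
form (existence of a Lipschitz potential `N` with `N(0,0)=0`, `∂N/∂x = q` for a.e. `t`
and all `x,x'` in integrated form, `∂N/∂t = -j` for a.e. `x` in integrated form). -/
theorem stmt_17
    (q j : ℝ → ℝ → ℝ)
    (hq_meas : Measurable (Function.uncurry q))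
    (hj_meas : Measurable (Function.uncurry j))
    (hq_bdd : ∃ C, ∀ t x, |q t x| ≤ C)
    (hj_bdd : ∃ C, ∀ t x, |j t x| ≤ C) :
    -- (i) ↔ (ii)
    ((∀ φ : SchwartzMap (ℝ × ℝ) ℝ,
        (∫ z : ℝ × ℝ, (fderiv ℝ (⇑φ) z ((1 : ℝ), (0 : ℝ)) * q z.1 z.2
          + fderiv ℝ (⇑φ) z ((0 : ℝ), (1 : ℝ)) * j z.1 z.2)) = 0)
      ↔ (∀ᵐ w ∂(volume : Measure ((ℝ × ℝ) × ℝ × ℝ)),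
          (∫ x in w.1.1..w.1.2, (q w.2.2 x - q w.2.1 x))
            + (∫ t in w.2.1..w.2.2, (j t w.1.2 - j t w.1.1)) = 0)) ∧
    -- (ii) ↔ (iii)
    ((∀ᵐ w ∂(volume : Measure ((ℝ × ℝ) × ℝ × ℝ)),
        (∫ x in w.1.1..w.1.2, (q w.2.2 x - q w.2.1 x))
          + (∫ t in w.2.1..w.2.2, (j t w.1.2 - j t w.1.1)) = 0)
      ↔ (∃ N : ℝ → ℝ → ℝ, N 0 0 = 0 ∧
          (∃ C, (∀ t x x', |N t x - N t x'| ≤ C * |x - x'|) ∧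
                (∀ x t t', |N t x - N t' x| ≤ C * |t - t'|)) ∧
          (∀ᵐ t ∂(volume : Measure ℝ), ∀ x x', N t x - N t x' = ∫ y in x'..x, q t y) ∧
          (∀ᵐ x ∂(volume : Measure ℝ), ∀ t t', N t x - N t' x = ∫ s in t'..t, -(j s x)))) := by
  obtain ⟨C, hC⟩ := hq_bdd
  obtain ⟨D, hD⟩ := hj_bdd
  refine ⟨⟨aux_12 q j hq_meas hj_meas hC hD, fun H => ?_⟩,
    ⟨aux_23 q j hq_meas hj_meas hC hD, ?_⟩⟩
  · obtain ⟨N, -, ⟨B, hB1, hB2⟩, h1, h2⟩ := aux_23 q j hq_meas hj_meas hC hD H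
    exact aux_31 q j hq_meas hj_meas hC hD N hB1 hB2 h1 h2
  · rintro ⟨N, -, -, h1, h2⟩
    exact aux_32 q j hq_meas hj_meas hC hD N h1 h2
end
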